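/- Assume 1 < Y < 8/5. As h → 0 with ε = ε(h) satisfying ε(h)·h^{−4/(8+Y)} → ∞ and ε(h)·h^{−1/(4−Y)} → 0, one has Var( X_h²·1_{|X_h| ≤ ε} ) = 2σ⁴h² + ((C₊+C₋)/(4−Y))·h·ε^{4−Y} + o(h·ε^{4−Y}). -/

import Mathlib

open MeasureTheory ProbabilityTheory Filter Asymptotics Set
open scoped Topology NNReal ENNReal Real

noncomputable section

/-- The Lévy density `s(x) = (C₊·1_{x>0} + C₋·1_{x<0})·q(x)·|x|^{−1−Y}`. -/
def levyDensity (Y Cp Cm : ℝ) (q : ℝ → ℝ) (x : ℝ) : ℝ :=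
  (if 0 < x then Cp else if x < 0 then Cm else 0) * q x * |x| ^ (-1 - Y)

/-- The Lévy measure `ν(dx) = s(x) dx`. -/
def levyMeasure (Y Cp Cm : ℝ) (q : ℝ → ℝ) : Measure ℝ :=
  volume.withDensity fun x => ENNReal.ofReal (levyDensity Y Cp Cm q x)

/-- The Lévy exponent `ψ_J(u) = ibu + ∫ (e^{iux} − 1 − iux·1_{|x|≤1}) ν(dx)`. -/
def psiJ (b Y Cp Cm : ℝ) (q : ℝ → ℝ) (u : ℝ) : ℂ :=
  Complex.I * b * u +
    ∫ x : ℝ,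
      (Complex.exp (Complex.I * u * x) - 1 - (if |x| ≤ 1 then Complex.I * u * x else 0))
      ∂(levyMeasure Y Cp Cm q)

/-- The scale parameter `ς = ((C₊+C₋)Γ(−Y)|cos(πY/2)|)^{1/Y}`. -/
def varsigma (Y Cp Cm : ℝ) : ℝ :=
  ((Cp + Cm) * Real.Gamma (-Y) * |Real.cos (π * Y / 2)|) ^ (1 / Y)

/-- The stable part of the Lévy exponent:
`ς^Y |u|^Y (1 − iβ·sgn(u)·tan(πY/2))` with `β = (C₊−C₋)/(C₊+C₋)`. -/
def stablePart (Y Cp Cm : ℝ) (u : ℝ) : ℂ :=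
  (varsigma Y Cp Cm ^ Y * |u| ^ Y : ℝ) *
    (1 - Complex.I * ((Cp - Cm) / (Cp + Cm)) * Real.sign u * Real.tan (π * Y / 2))

/-- Characteristic function of `X̃_h`, the time-`h` marginal of a Brownian motion with
variance `σ²` plus an independent strictly `Y`-stable process. -/
def tildeCF (σ Y Cp Cm : ℝ) (h u : ℝ) : ℂ :=
  Complex.exp (-(σ ^ 2 * u ^ 2 * h / 2) - h * stablePart Y Cp Cm u)


/-! ### Fourier representation of test functions -/

lemma fourier_rep_one (f : ℝ → ℂ) (hf : ContDiff ℝ (⊤ : ℕ∞) f) (hc : HasCompactSupport f) (x : ℝ) :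
    f x = ∫ u : ℝ, FourierTransform.fourier f u * Complex.exp ((2 * π * u : ℝ) * x * Complex.I) := by
  have h1 := (hc.toSchwartzMap hf).continuous.fourierInv_fourier_eq
    (hc.toSchwartzMap hf).integrable (by
      rw [← SchwartzMap.fourier_coe]; exact SchwartzMap.integrable _)
  have h2 := congrFun h1 x
  rw [Real.fourierInv_eq] at h2
  have h3 : ((hc.toSchwartzMap hf : SchwartzMap ℝ ℂ) : ℝ → ℂ) = f := by
    ext y; rfl
  rw [h3] at h2
  rw [← h2]
  refine integral_congr_ae (Eventually.of_forall fun u => ?_)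
  simp only [Circle.smul_def, Real.fourierChar_apply, smul_eq_mul, inner]
  rw [mul_comm]
  congr 2
  simp; ring_nf

lemma fourier_decay (f : ℝ → ℂ) (hf : ContDiff ℝ (⊤ : ℕ∞) f) (hc : HasCompactSupport f) (k : ℕ) :
    Integrable (fun u : ℝ => |u| ^ k * ‖FourierTransform.fourier f u‖) := by
  have h := SchwartzMap.integrable_pow_mul volume (FourierTransform.fourier (hc.toSchwartzMap hf)) k
  exact h

lemma fourier_cont (f : ℝ → ℂ) (hf : ContDiff ℝ (⊤ : ℕ∞) f) (hc : HasCompactSupport f) :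
    Continuous (FourierTransform.fourier f) := by
  exact (FourierTransform.fourier (hc.toSchwartzMap hf)).continuous

lemma smooth_deriv {f : ℝ → ℝ} (hf : ContDiff ℝ (⊤ : ℕ∞) f) : ContDiff ℝ (⊤ : ℕ∞) (deriv f) :=
  (contDiff_infty_iff_deriv.1 hf).2

lemma deriv_ofReal_comp {f : ℝ → ℝ} (hf : ContDiff ℝ (⊤ : ℕ∞) f) :
    deriv (fun x => (f x : ℂ)) = fun x => ((deriv f x : ℝ) : ℂ) := by
  ext x
  exact (((hf.differentiable (by simp)) x).hasDerivAt.ofReal_comp).deriv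

lemma smooth_ofReal {f : ℝ → ℝ} (hf : ContDiff ℝ (⊤ : ℕ∞) f) :
    ContDiff ℝ (⊤ : ℕ∞) (fun x => (f x : ℂ)) :=
  Complex.ofRealCLM.contDiff.comp hf

lemma compact_ofReal {f : ℝ → ℝ} (hc : HasCompactSupport f) :
    HasCompactSupport (fun x => (f x : ℂ)) :=
  hc.comp_left (g := fun x : ℝ => (x : ℂ)) (by simp)

lemma fourier_rep (f : ℝ → ℝ) (hf : ContDiff ℝ (⊤ : ℕ∞) f) (hc : HasCompactSupport f) :
    ∃ F : ℝ → ℂ, Continuous F ∧ (∀ k : ℕ, Integrable (fun u : ℝ => |u| ^ k * ‖F u‖)) ∧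
      (∀ x : ℝ, (f x : ℂ) = ∫ u : ℝ, F u * Complex.exp (u * x * Complex.I)) ∧
      (∀ x : ℝ, ((deriv f x : ℝ) : ℂ) =
        ∫ u : ℝ, (u * Complex.I) * F u * Complex.exp (u * x * Complex.I)) ∧
      (∀ x : ℝ, ((deriv (deriv f) x : ℝ) : ℂ) =
        ∫ u : ℝ, (u * Complex.I) ^ 2 * F u * Complex.exp (u * x * Complex.I)) := by
  set g : ℝ → ℂ := fun x => (f x : ℂ) with hg
  have hgs := smooth_ofReal hf
  have hgc := compact_ofReal hc
  have hpi : (0 : ℝ) < 2 * π := by positivity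
  have key : ∀ (h : ℝ → ℂ) (x : ℝ), ∫ u : ℝ, h u * Complex.exp ((2 * π * u : ℝ) * x * Complex.I)
      = ∫ u : ℝ, ((2 * π : ℝ)⁻¹ : ℂ) * h (u / (2 * π)) * Complex.exp (u * x * Complex.I) := by
    intro h x
    have := Measure.integral_comp_mul_left
      (fun u : ℝ => ((2 * π : ℝ)⁻¹ : ℂ) * h (u / (2 * π)) * Complex.exp (u * x * Complex.I)) (2 * π)
    rw [abs_of_pos (by positivity)] at this
    have h2 : ∫ u : ℝ, ((2 * π : ℝ)⁻¹ : ℂ) * h (u / (2 * π)) * Complex.exp (u * x * Complex.I)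
      = (2 * π) • ∫ u : ℝ, ((2 * π : ℝ)⁻¹ : ℂ) * h ((2 * π * u) / (2 * π)) * Complex.exp ((2 * π * u : ℝ) * x * Complex.I) := by
      rw [this, smul_smul, mul_inv_cancel₀ hpi.ne', one_smul]
    rw [h2, ← integral_smul]
    refine integral_congr_ae (Eventually.of_forall fun u => ?_)
    simp only [mul_div_cancel_left₀ u hpi.ne', Complex.real_smul]
    rw [← mul_assoc, ← mul_assoc, mul_inv_cancel₀ (by exact_mod_cast hpi.ne'), one_mul]
  have hd1 : FourierTransform.fourier (fun x => ((deriv f x : ℝ) : ℂ)) =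
      fun x : ℝ => (2 * π * Complex.I * x) • FourierTransform.fourier g x := by
    rw [← deriv_ofReal_comp hf]
    refine Real.fourier_deriv ?_ (hgs.differentiable (by simp)) ?_
    · exact hgs.continuous.integrable_of_hasCompactSupport hgc
    · exact (hgs.continuous_deriv (by simp)).integrable_of_hasCompactSupport hgc.deriv
  have hd2 : FourierTransform.fourier (fun x => ((deriv (deriv f) x : ℝ) : ℂ)) =
      fun x : ℝ => (2 * π * Complex.I * x) • (2 * π * Complex.I * x) • FourierTransform.fourier g x := by
    have hs := smooth_ofReal (smooth_deriv hf)
    have hcc := compact_ofReal hc.deriv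
    rw [← deriv_ofReal_comp (smooth_deriv hf)]
    rw [Real.fourier_deriv (hs.continuous.integrable_of_hasCompactSupport hcc)
      (hs.differentiable (by simp))
      ((hs.continuous_deriv (by simp)).integrable_of_hasCompactSupport hcc.deriv), hd1]
  refine ⟨fun u => ((2 * π : ℝ)⁻¹ : ℂ) * FourierTransform.fourier g (u / (2 * π)), ?_, ?_, ?_, ?_, ?_⟩
  · have := fourier_cont g hgs hgc
    fun_prop
  · intro k
    have h := fourier_decay g hgs hgc k
    have h2 := (h.comp_div hpi.ne').const_mul ((2 * π) ^ k * (2 * π)⁻¹)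
    refine h2.congr (Eventually.of_forall fun u => ?_)
    simp only [norm_mul, abs_div, div_pow, abs_of_pos hpi, norm_inv, Complex.norm_real,
      Real.norm_of_nonneg hpi.le]
    field_simp
  · intro x
    rw [← key, ← fourier_rep_one g hgs hgc x]
  · intro x
    have h1 := fourier_rep_one _ (smooth_ofReal (smooth_deriv hf)) (compact_ofReal hc.deriv) x
    rw [h1, key, hd1]
    refine integral_congr_ae (Eventually.of_forall fun u => ?_)
    simp only [smul_eq_mul]
    push_cast
    have : (π : ℂ) ≠ 0 := by exact_mod_cast Real.pi_ne_zero
    field_simp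
  · intro x
    have h1 := fourier_rep_one _ (smooth_ofReal (smooth_deriv (smooth_deriv hf)))
      (compact_ofReal hc.deriv.deriv) x
    rw [h1, key, hd2]
    refine integral_congr_ae (Eventually.of_forall fun u => ?_)
    simp only [smul_eq_mul]
    push_cast
    have : (π : ℂ) ≠ 0 := by exact_mod_cast Real.pi_ne_zero
    field_simp


/-! ### Dynkin formula -/

/-- Lévy exponent with full compensation. -/
def levExp (A B : ℝ) (ν : Measure ℝ) (u : ℝ) : ℂ :=
  -(A * u ^ 2) + B * u * Complex.I +
    ∫ r : ℝ, (Complex.exp (u * r * Complex.I) - 1 - u * r * Complex.I) ∂ν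

/-- A family of marginals of a Lévy process with exponent `levExp A B ν`. -/
structure IsLevy (μ : ℝ → Measure ℝ) (A B : ℝ) (ν : Measure ℝ) : Prop where
  prob : ∀ s, 0 < s → IsProbabilityMeasure (μ s)
  sfin : SFinite ν
  int : Integrable (fun r : ℝ => min |r| (r ^ 2)) ν
  cf : ∀ s, 0 < s → ∀ u, charFun (μ s) u = Complex.exp (s * levExp A B ν u)

/-- Nonlocal part of the generator. -/
def genN (ν : Measure ℝ) (f : ℝ → ℝ) (z : ℝ) : ℝ :=
  ∫ r, (f (z + r) - f z - r * deriv f z) ∂ν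

/-- The generator. -/
def gen (A B : ℝ) (ν : Measure ℝ) (f : ℝ → ℝ) (z : ℝ) : ℝ :=
  A * deriv (deriv f) z + B * deriv f z + genN ν f z

lemma exp_comp_bound (t : ℝ) :
    ‖Complex.exp (t * Complex.I) - 1 - t * Complex.I‖ ≤ 2 * min |t| (t ^ 2) := by
  have h0 : ‖Complex.exp (t * Complex.I) - 1‖ ≤ |t| := by
    rw [mul_comm]; exact Real.norm_exp_I_mul_ofReal_sub_one_le
  have hn : ‖(t : ℂ) * Complex.I‖ = |t| := by simp
  have h1 : ‖Complex.exp (t * Complex.I) - 1 - t * Complex.I‖ ≤ 2 * |t| := by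
    calc _ ≤ ‖Complex.exp (t * Complex.I) - 1‖ + ‖(t : ℂ) * Complex.I‖ := norm_sub_le _ _
      _ ≤ _ := by rw [hn]; linarith
  rw [mul_min_of_nonneg _ _ (by norm_num)]
  refine le_min h1 ?_
  rcases le_total |t| 1 with h | h
  · have := Complex.norm_exp_sub_one_sub_id_le (x := t * Complex.I) (by rw [hn]; exact h)
    rw [hn, sq_abs] at this
    nlinarith [sq_nonneg t]
  · rw [← sq_abs]; nlinarith

lemma min_mul_bound (u r : ℝ) : min |u * r| ((u * r) ^ 2) ≤ (|u| + |u| ^ 2) * min |r| (r ^ 2) := by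
  rw [abs_mul, mul_pow, ← sq_abs u, ← sq_abs r]
  have := abs_nonneg u
  have := abs_nonneg r
  rcases le_total |r| (|r| ^ 2) with h | h
  · rw [min_eq_left h]
    refine (min_le_left _ _).trans ?_
    gcongr; nlinarith
  · rw [min_eq_right h]
    refine (min_le_right _ _).trans ?_
    gcongr; nlinarith

lemma exp_comp_bound2 (u r : ℝ) :
    ‖Complex.exp (u * r * Complex.I) - 1 - u * r * Complex.I‖ ≤
      (2 * (|u| + |u| ^ 2)) * min |r| (r ^ 2) := by
  have h := exp_comp_bound (u * r)
  push_cast at h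
  refine h.trans ?_
  have := min_mul_bound u r
  linarith

lemma levExp_bound (A B : ℝ) (ν : Measure ℝ) (hν : Integrable (fun r : ℝ => min |r| (r ^ 2)) ν)
    (u : ℝ) :
    ‖levExp A B ν u‖ ≤ (|A| + |B| + 2 * ∫ r, min |r| (r ^ 2) ∂ν) * (|u| + |u| ^ 2) := by
  have h1 : ‖∫ r : ℝ, (Complex.exp (u * r * Complex.I) - 1 - u * r * Complex.I) ∂ν‖ ≤
      ∫ r, (2 * (|u| + |u| ^ 2)) * min |r| (r ^ 2) ∂ν :=
    norm_integral_le_of_norm_le (hν.const_mul _) (Eventually.of_forall fun r => exp_comp_bound2 u r)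
  rw [integral_const_mul] at h1
  have h2 : ‖-((A : ℂ) * u ^ 2)‖ ≤ |A| * |u| ^ 2 := by simp
  have h3 : ‖(B : ℂ) * u * Complex.I‖ ≤ |B| * |u| := by simp
  have h4 := (norm_add₃_le (a := -((A : ℂ) * u ^ 2)) (b := (B : ℂ) * u * Complex.I)
    (c := ∫ r : ℝ, (Complex.exp (u * r * Complex.I) - 1 - u * r * Complex.I) ∂ν))
  unfold levExp
  have := abs_nonneg A
  have := abs_nonneg B
  have := abs_nonneg u
  nlinarith [mul_nonneg (abs_nonneg A) (abs_nonneg u), mul_nonneg (abs_nonneg B) (sq_nonneg |u|)]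

lemma levExp_meas (A B : ℝ) (ν : Measure ℝ) [SFinite ν] : Measurable (levExp A B ν) := by
  unfold levExp
  have : Measurable fun u : ℝ =>
      ∫ r : ℝ, (Complex.exp (u * r * Complex.I) - 1 - u * r * Complex.I) ∂ν := by
    apply StronglyMeasurable.measurable
    apply StronglyMeasurable.integral_prod_right
      (f := fun u r : ℝ => Complex.exp (u * r * Complex.I) - 1 - u * r * Complex.I)
    apply Continuous.stronglyMeasurable
    simp only [Function.uncurry_def]
    fun_prop
  fun_prop

lemma norm_exp_uxI (u x : ℝ) : ‖Complex.exp (u * x * Complex.I)‖ = 1 := by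
  have := Complex.norm_exp_ofReal_mul_I (u * x)
  push_cast at this
  exact this

lemma pairing (μ : Measure ℝ) [IsProbabilityMeasure μ] (G : ℝ → ℂ) (hG : Integrable G) :
    ∫ x, (∫ u : ℝ, G u * Complex.exp (u * x * Complex.I)) ∂μ = ∫ u : ℝ, G u * charFun μ u := by
  rw [integral_integral_swap]
  · refine integral_congr_ae (Eventually.of_forall fun u => ?_)
    simp only [charFun_apply_real]
    rw [integral_const_mul]
  · have h1 : Integrable (fun p : ℝ × ℝ => G p.2) (μ.prod volume) := hG.comp_snd μ
    have h2 : Continuous (fun p : ℝ × ℝ => Complex.exp (p.2 * p.1 * Complex.I)) := by fun_prop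
    refine h1.norm.mono' (h1.aestronglyMeasurable.mul h2.aestronglyMeasurable) ?_
    refine Eventually.of_forall fun p => ?_
    simp only [Function.uncurry, norm_mul, norm_exp_uxI, mul_one]
    exact le_rfl

lemma int_pow_F {F : ℝ → ℂ} (hFc : Continuous F)
    (hF : ∀ k : ℕ, Integrable (fun u : ℝ => |u| ^ k * ‖F u‖)) : Integrable F := by
  refine (hF 0).mono' hFc.aestronglyMeasurable (Eventually.of_forall fun u => by simp)

lemma int_F_levExp {F : ℝ → ℂ} (hFc : Continuous F)
    (hF : ∀ k : ℕ, Integrable (fun u : ℝ => |u| ^ k * ‖F u‖)) (A B : ℝ) (ν : Measure ℝ) [SFinite ν]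
    (hν : Integrable (fun r : ℝ => min |r| (r ^ 2)) ν) :
    Integrable (fun u => F u * levExp A B ν u) := by
  have h := (((hF 1).add (hF 2)).const_mul (|A| + |B| + 2 * ∫ r, min |r| (r ^ 2) ∂ν))
  refine h.mono' (hFc.aestronglyMeasurable.mul (levExp_meas A B ν).aestronglyMeasurable)
    (Eventually.of_forall fun u => ?_)
  have := levExp_bound A B ν hν u
  rw [norm_mul]
  simp only [Pi.add_apply]
  calc _ ≤ ‖F u‖ * ((|A| + |B| + 2 * ∫ r, min |r| (r ^ 2) ∂ν) * (|u| + |u| ^ 2)) := by gcongr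
    _ = _ := by ring

lemma gen_rep (f : ℝ → ℝ) {F : ℝ → ℂ} (hFc : Continuous F)
    (hF : ∀ k : ℕ, Integrable (fun u : ℝ => |u| ^ k * ‖F u‖))
    (h0 : ∀ x : ℝ, (f x : ℂ) = ∫ u : ℝ, F u * Complex.exp (u * x * Complex.I))
    (h1 : ∀ x : ℝ, ((deriv f x : ℝ) : ℂ) =
        ∫ u : ℝ, (u * Complex.I) * F u * Complex.exp (u * x * Complex.I))
    (h2 : ∀ x : ℝ, ((deriv (deriv f) x : ℝ) : ℂ) =
        ∫ u : ℝ, (u * Complex.I) ^ 2 * F u * Complex.exp (u * x * Complex.I))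
    (A B : ℝ) (ν : Measure ℝ) [SFinite ν]
    (hν : Integrable (fun r : ℝ => min |r| (r ^ 2)) ν) (z : ℝ) :
    (gen A B ν f z : ℂ) = ∫ u : ℝ, (F u * levExp A B ν u) * Complex.exp (u * z * Complex.I) := by
  have i0 : ∀ x : ℝ, Integrable (fun u : ℝ => F u * Complex.exp (u * x * Complex.I)) := by
    intro x
    refine (hF 0).mono' (by fun_prop) (Eventually.of_forall fun u => ?_)
    simp [norm_exp_uxI]
  have i1 : ∀ x : ℝ, Integrable (fun u : ℝ => (u * Complex.I) * F u * Complex.exp (u * x * Complex.I)) := by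
    intro x
    refine (hF 1).mono' (by fun_prop) (Eventually.of_forall fun u => ?_)
    simp [norm_exp_uxI]
  have i2 : ∀ x : ℝ, Integrable (fun u : ℝ => (u * Complex.I) ^ 2 * F u * Complex.exp (u * x * Complex.I)) := by
    intro x
    refine (hF 2).mono' (by fun_prop) (Eventually.of_forall fun u => ?_)
    simp [norm_exp_uxI]
  have hN : (genN ν f z : ℂ) = ∫ u : ℝ, ∫ r : ℝ, F u * Complex.exp (u * z * Complex.I) *
      (Complex.exp (u * r * Complex.I) - 1 - u * r * Complex.I) ∂ν := by
    unfold genN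
    rw [← integral_complex_ofReal]
    rw [integral_integral_swap]
    · refine integral_congr_ae (Eventually.of_forall fun r => ?_)
      simp only [Complex.ofReal_sub, Complex.ofReal_mul]
      rw [h0, h0, h1, ← integral_const_mul, ← integral_sub (i0 _) (i0 _), ← integral_sub]
      · refine integral_congr_ae (Eventually.of_forall fun u => ?_)
        simp only
        have : Complex.exp (u * ((z + r : ℝ) : ℂ) * Complex.I) =
            Complex.exp (u * z * Complex.I) * Complex.exp (u * r * Complex.I) := by
          rw [← Complex.exp_add]; congr 1; push_cast; ring
        rw [this]; ring
      · exact (i0 _).sub (i0 _)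
      · exact (i1 z).const_mul _
    · have hm := (((hF 1).add (hF 2)).const_mul 2).mul_prod hν
      refine hm.mono' ?_ (Eventually.of_forall fun p => ?_)
      · apply Continuous.aestronglyMeasurable
        simp only [Function.uncurry_def]
        fun_prop
      · simp only [Function.uncurry, norm_mul, norm_exp_uxI, mul_one, Pi.add_apply]
        have := exp_comp_bound2 p.1 p.2
        calc _ ≤ ‖F p.1‖ * ((2 * (|p.1| + |p.1| ^ 2)) * min |p.2| (p.2 ^ 2)) := by gcongr
          _ = _ := by ring
  have hNi : Integrable (fun u : ℝ => ∫ r : ℝ, F u * Complex.exp (u * z * Complex.I) *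
      (Complex.exp (u * r * Complex.I) - 1 - u * r * Complex.I) ∂ν) := by
    have := int_F_levExp hFc hF 0 0 ν hν
    refine (this.mul_bdd (c := 1) (g := fun u : ℝ => Complex.exp (u * z * Complex.I)) ?_ ?_).congr ?_
    · apply Continuous.aestronglyMeasurable; fun_prop
    · exact Eventually.of_forall fun u => (norm_exp_uxI u z).le
    · refine Eventually.of_forall fun u => ?_
      simp only [levExp]
      rw [integral_const_mul]
      push_cast; ring
  unfold gen
  push_cast
  rw [h2, h1, hN, ← integral_const_mul, ← integral_const_mul,
    ← integral_add ((i2 z).const_mul _) ((i1 z).const_mul _), ← integral_add _ hNi]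
  · refine integral_congr_ae (Eventually.of_forall fun u => ?_)
    simp only [levExp]
    rw [integral_const_mul]
    have : Complex.I ^ 2 = -1 := Complex.I_sq
    rw [mul_pow, this]
    ring
  · exact ((i2 z).const_mul _).add ((i1 z).const_mul _)

lemma levExp_re {μ : ℝ → Measure ℝ} {A B : ℝ} {ν : Measure ℝ} (h : IsLevy μ A B ν) (u : ℝ) :
    (levExp A B ν u).re ≤ 0 := by
  have := h.prob 1 one_pos
  have h1 := norm_charFun_le_one (μ := μ 1) u
  rw [h.cf 1 one_pos, Complex.norm_exp] at h1
  have := Real.exp_le_one_iff.1 h1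
  simpa using this

lemma norm_exp_levExp {μ : ℝ → Measure ℝ} {A B : ℝ} {ν : Measure ℝ} (h : IsLevy μ A B ν) (u s : ℝ)
    (hs : 0 ≤ s) : ‖Complex.exp (s * levExp A B ν u)‖ ≤ 1 := by
  rw [Complex.norm_exp, Real.exp_le_one_iff]
  have := levExp_re h u
  simp
  nlinarith

lemma dynkin {μ : ℝ → Measure ℝ} {A B : ℝ} {ν : Measure ℝ} (h : IsLevy μ A B ν)
    (f : ℝ → ℝ) (hf : ContDiff ℝ (⊤ : ℕ∞) f) (hc : HasCompactSupport f) :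
    (∀ s, 0 < s → HasDerivAt (fun s => ∫ x, f x ∂μ s) (∫ x, gen A B ν f x ∂μ s) s) ∧
    Tendsto (fun s => ∫ x, f x ∂μ s) (𝓝[>] 0) (𝓝 (f 0)) := by
  obtain ⟨F, hFc, hF, h0, h1, h2⟩ := fourier_rep f hf hc
  have := h.sfin
  have hFi := int_pow_F hFc hF
  have hFL := int_F_levExp hFc hF A B ν h.int
  have hm := levExp_meas A B ν
  have e0 : ∀ s, 0 < s → ((∫ x, f x ∂μ s : ℝ) : ℂ) =
      ∫ u, F u * Complex.exp (s * levExp A B ν u) := by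
    intro s hs
    have := h.prob s hs
    rw [← integral_complex_ofReal]
    simp_rw [h0]
    rw [pairing _ _ hFi]
    simp_rw [h.cf s hs]
  have e1 : ∀ s, 0 < s → ((∫ x, gen A B ν f x ∂μ s : ℝ) : ℂ) =
      ∫ u, F u * (levExp A B ν u * Complex.exp (s * levExp A B ν u)) := by
    intro s hs
    have := h.prob s hs
    rw [← integral_complex_ofReal]
    simp_rw [gen_rep f hFc hF h0 h1 h2 A B ν h.int]
    rw [pairing _ _ hFL]
    simp_rw [h.cf s hs, mul_assoc]
  constructor
  · intro s hs
    have hd : HasDerivAt (fun s : ℝ => ∫ u, F u * Complex.exp (s * levExp A B ν u))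
        (∫ u, F u * (levExp A B ν u * Complex.exp (s * levExp A B ν u))) s := by
      refine (hasDerivAt_integral_of_dominated_loc_of_deriv_le (s := Set.Ioi 0)
        (bound := fun u => ‖F u * levExp A B ν u‖)
        (F' := fun (s : ℝ) u => F u * (levExp A B ν u * Complex.exp (s * levExp A B ν u)))
        (Ioi_mem_nhds hs) ?_ ?_ ?_ ?_ hFL.norm ?_).2
      · refine Eventually.of_forall fun t => ?_
        exact hFc.aestronglyMeasurable.mul (by fun_prop)
      · refine hFi.norm.mono' (hFc.aestronglyMeasurable.mul (by fun_prop))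
          (Eventually.of_forall fun u => ?_)
        rw [norm_mul]
        exact mul_le_of_le_one_right (norm_nonneg _) (norm_exp_levExp h u s hs.le)
      · exact hFc.aestronglyMeasurable.mul (by fun_prop)
      · refine Eventually.of_forall fun u t ht => ?_
        rw [← mul_assoc, norm_mul]
        exact mul_le_of_le_one_right (norm_nonneg _) (norm_exp_levExp h u t (le_of_lt ht))
      · refine Eventually.of_forall fun u t _ => ?_
        have : HasDerivAt (fun t : ℝ => (t : ℂ) * levExp A B ν u) (levExp A B ν u) t := by
          simpa using (Complex.ofRealCLM.hasDerivAt (x := t)).mul_const (levExp A B ν u)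
        have := this.cexp.const_mul (F u)
        simpa [mul_comm (levExp A B ν u)] using this
    have hre := (Complex.reCLM.hasFDerivAt.comp_hasDerivAt s hd)
    rw [← e1 s hs] at hre
    simp only [Complex.reCLM_apply, Complex.ofReal_re] at hre
    refine hre.congr_of_eventuallyEq ?_
    filter_upwards [Ioi_mem_nhds hs] with t ht
    simp only [Function.comp, Complex.reCLM_apply]
    rw [← e0 t ht, Complex.ofReal_re]
  · have ht : Tendsto (fun s : ℝ => ∫ u, F u * Complex.exp (s * levExp A B ν u)) (𝓝[>] 0)
        (𝓝 (∫ u, F u)) := by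
      refine tendsto_integral_filter_of_dominated_convergence (fun u => ‖F u‖) ?_ ?_ hFi.norm ?_
      · exact Eventually.of_forall fun t => hFc.aestronglyMeasurable.mul (by fun_prop)
      · filter_upwards [self_mem_nhdsWithin] with t ht
        refine Eventually.of_forall fun u => ?_
        rw [norm_mul]
        exact mul_le_of_le_one_right (norm_nonneg _) (norm_exp_levExp h u t (le_of_lt ht))
      · refine Eventually.of_forall fun u => ?_
        have : Continuous fun t : ℝ => F u * Complex.exp (t * levExp A B ν u) := by fun_prop
        have := (this.tendsto 0).mono_left (nhdsWithin_le_nhds (s := Set.Ioi 0))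
        simpa using this
    have h00 : (f 0 : ℂ) = ∫ u, F u := by rw [h0]; simp
    rw [← h00] at ht
    have := (Complex.continuous_re.tendsto _).comp ht
    simp only [Complex.ofReal_re] at this
    refine this.congr' ?_
    filter_upwards [self_mem_nhdsWithin] with t ht
    simp only [Function.comp]
    rw [← e0 t ht, Complex.ofReal_re]

/-- Mean value form of Dynkin's formula, compared to a polynomial `p`. -/
lemma dynkin_mvt {μ : ℝ → Measure ℝ} {A B : ℝ} {ν : Measure ℝ} (h : IsLevy μ A B ν)
    (f : ℝ → ℝ) (hf : ContDiff ℝ (⊤ : ℕ∞) f) (hc : HasCompactSupport f)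
    (p p' : ℝ → ℝ) (hp : ∀ s, HasDerivAt p (p' s) s) (hp0 : p 0 = f 0) (s D : ℝ) (hs : 0 < s)
    (hb : ∀ c, 0 < c → c < s → |∫ x, gen A B ν f x ∂μ c - p' c| ≤ D) :
    |∫ x, f x ∂μ s - p s| ≤ s * D := by
  obtain ⟨hd, ht⟩ := dynkin h f hf hc
  set G : ℝ → ℝ := fun t => if 0 < t then ∫ x, f x ∂μ t else f 0 with hG
  have hGd : ∀ t, 0 < t → HasDerivAt G (∫ x, gen A B ν f x ∂μ t) t := by
    intro t ht
    refine (hd t ht).congr_of_eventuallyEq ?_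
    filter_upwards [Ioi_mem_nhds ht] with r hr
    simp [hG, show 0 < r from hr]
  have hcont : ContinuousOn G (Set.Icc 0 s) := by
    intro t ht0
    rcases ht0.1.eq_or_lt with h0 | h0
    · subst h0
      have : ContinuousWithinAt G (Set.Ici 0) 0 := by
        rw [← continuousWithinAt_Ioi_iff_Ici]
        have : G 0 = f 0 := by simp [hG]
        unfold ContinuousWithinAt
        rw [this]
        refine ht.congr' ?_
        filter_upwards [self_mem_nhdsWithin] with r hr
        simp [hG, show 0 < r from hr]
      exact this.mono Set.Icc_subset_Ici_self
    · exact (hGd t h0).continuousAt.continuousWithinAt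
  have hpc : Continuous p := continuous_iff_continuousAt.2 fun t => (hp t).continuousAt
  obtain ⟨c, hcm, hceq⟩ := exists_hasDerivAt_eq_slope (fun t => G t - p t)
    (fun t => ∫ x, gen A B ν f x ∂μ t - p' t) hs (hcont.sub hpc.continuousOn)
    (fun t ht => (hGd t ht.1).sub (hp t))
  have hb' := hb c hcm.1 hcm.2
  rw [hceq] at hb'
  simp only [hG, hs, if_true, lt_irrefl, if_false, hp0, sub_self, sub_zero] at hb'
  rw [abs_div, abs_of_pos hs, div_le_iff₀ hs] at hb'
  linarith


/-! ### Bounds on the nonlocal part and expansions -/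

lemma lip_of_deriv_bound {f : ℝ → ℝ} (hf : Differentiable ℝ f) {C : ℝ}
    (hC : ∀ x, |deriv f x| ≤ C) (x y : ℝ) : |f y - f x| ≤ C * |y - x| := by
  have := Convex.norm_image_sub_le_of_norm_deriv_le (f := f) (s := Set.univ) (C := C) (x := x) (y := y)
    (fun t _ => hf t) (fun t _ => hC t) convex_univ (Set.mem_univ _) (Set.mem_univ _)
  simpa [Real.norm_eq_abs] using this

lemma abs_integral_le_of {α : Type*} [MeasurableSpace α] {m : Measure α} {g k : α → ℝ}
    (hk : Integrable k m) (h : ∀ x, |g x| ≤ k x) : |∫ x, g x ∂m| ≤ ∫ x, k x ∂m := by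
  have := norm_integral_le_of_norm_le (f := g) hk (Eventually.of_forall h)
  exact this

lemma tay {f : ℝ → ℝ} (hf : Differentiable ℝ f) (hf' : Differentiable ℝ (deriv f)) {C₁ C₂ : ℝ}
    (h1 : ∀ x, |deriv f x| ≤ C₁) (h2 : ∀ x, |deriv (deriv f) x| ≤ C₂) (z r : ℝ) :
    |f (z + r) - f z - r * deriv f z| ≤ (2 * C₁ + C₂) * min |r| (r ^ 2) := by
  have hC1 : 0 ≤ C₁ := (abs_nonneg _).trans (h1 0)
  have hC2 : 0 ≤ C₂ := (abs_nonneg _).trans (h2 0)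
  have b1 : |f (z + r) - f z - r * deriv f z| ≤ (2 * C₁ + C₂) * |r| := by
    have e1 := lip_of_deriv_bound hf h1 z (z + r)
    rw [add_sub_cancel_left] at e1
    have e2 : |r * deriv f z| ≤ |r| * C₁ := by rw [abs_mul]; gcongr; exact h1 z
    have e3 := abs_sub (f (z + r) - f z) (r * deriv f z)
    nlinarith [mul_nonneg hC2 (abs_nonneg r)]
  have b2 : |f (z + r) - f z - r * deriv f z| ≤ (2 * C₁ + C₂) * r ^ 2 := by
    have hd : ∀ t : ℝ, HasDerivAt (fun t => f (z + t) - t * deriv f z)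
        (deriv f (z + t) - deriv f z) t := by
      intro t
      have e1 : HasDerivAt (fun t => f (z + t)) (deriv f (z + t)) t := by
        simpa using (hf (z + t)).hasDerivAt.comp_const_add z t
      have e2 : HasDerivAt (fun t => t * deriv f z) (deriv f z) t := by
        simpa using (hasDerivAt_id t).mul_const (deriv f z)
      exact e1.sub e2
    have := Convex.norm_image_sub_le_of_norm_hasDerivWithin_le
      (f := fun t => f (z + t) - t * deriv f z) (s := Set.Icc (-|r|) |r|) (C := C₂ * |r|)
      (x := 0) (y := r)
      (fun t _ => (hd t).hasDerivWithinAt) (fun t ht => ?_) (convex_Icc _ _)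
      (by simp) (by exact ⟨neg_abs_le r, le_abs_self r⟩)
    · simp only [add_zero, zero_mul, sub_zero, Real.norm_eq_abs] at this
      have e : f (z + r) - r * deriv f z - f z = f (z + r) - f z - r * deriv f z := by ring
      rw [e] at this
      refine this.trans ?_
      rw [mul_assoc, ← sq, sq_abs]
      nlinarith [sq_nonneg r]
    · rw [Real.norm_eq_abs]
      have e1 := lip_of_deriv_bound hf' h2 z (z + t)
      rw [add_sub_cancel_left] at e1
      exact e1.trans (mul_le_mul_of_nonneg_left (abs_le.2 ht) hC2)
  rw [mul_min_of_nonneg _ _ (by positivity)]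
  exact le_min b1 b2

lemma bdd_of_cs {f : ℝ → ℝ} (hf : Continuous f) (hc : HasCompactSupport f) :
    ∃ C, 0 ≤ C ∧ ∀ x, |f x| ≤ C := by
  obtain ⟨C, hC⟩ := hf.bounded_above_of_compact_support hc
  exact ⟨C, (norm_nonneg _).trans (hC 0), hC⟩

lemma nl_bound (f : ℝ → ℝ) (hf : ContDiff ℝ (⊤ : ℕ∞) f) (hc : HasCompactSupport f) :
    ∃ C, 0 ≤ C ∧ (∀ z r, |f (z + r) - f z - r * deriv f z| ≤ C * min |r| (r ^ 2)) ∧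
      (∀ w z r, |(f (z + r) - f z - r * deriv f z) - (f (w + r) - f w - r * deriv f w)|
        ≤ (C * |z - w|) * min |r| (r ^ 2)) := by
  have hf1 := smooth_deriv hf
  have hf2 := smooth_deriv hf1
  have hf3 := smooth_deriv hf2
  obtain ⟨C1, p1, h1⟩ := bdd_of_cs hf1.continuous hc.deriv
  obtain ⟨C2, p2, h2⟩ := bdd_of_cs hf2.continuous hc.deriv.deriv
  obtain ⟨C3, p3, h3⟩ := bdd_of_cs hf3.continuous hc.deriv.deriv.deriv
  have d0 := hf.differentiable (by simp)
  have d1 := hf1.differentiable (by simp)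
  have d2 := hf2.differentiable (by simp)
  have hm : ∀ r : ℝ, 0 ≤ min |r| (r ^ 2) := fun r => le_min (abs_nonneg r) (sq_nonneg r)
  refine ⟨2 * C1 + 3 * C2 + C3, by positivity, fun z r => ?_, fun w z r => ?_⟩
  · refine (tay d0 d1 h1 h2 z r).trans ?_
    exact mul_le_mul_of_nonneg_right (by linarith) (hm r)
  · have hd : ∀ (g : ℝ → ℝ), Differentiable ℝ g → 
        deriv (fun r => g (z + r) - g (w + r)) = fun r => deriv g (z + r) - deriv g (w + r) := by
      intro g hg
      ext t
      have e1 : HasDerivAt (fun t => g (z + t)) (deriv g (z + t)) t := by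
        simpa using (hg (z + t)).hasDerivAt.comp_const_add z t
      have e2 : HasDerivAt (fun t => g (w + t)) (deriv g (w + t)) t := by
        simpa using (hg (w + t)).hasDerivAt.comp_const_add w t
      exact (e1.sub e2).deriv
    have := tay (f := fun r => f (z + r) - f (w + r)) (C₁ := C2 * |z - w|) (C₂ := C3 * |z - w|)
      (by fun_prop) (by rw [hd f d0]; fun_prop) (fun x => ?_) (fun x => ?_) 0 r
    · rw [hd f d0] at this
      simp only [zero_add, add_zero] at this
      have e : (f (z + r) - f z - r * deriv f z) - (f (w + r) - f w - r * deriv f w) =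
        f (z + r) - f (w + r) - (f z - f w) - r * (deriv f z - deriv f w) := by ring
      rw [e]
      refine this.trans ?_
      have := hm r
      have := abs_nonneg (z - w)
      gcongr
      nlinarith [mul_nonneg p1 (abs_nonneg (z - w)), mul_nonneg p2 (abs_nonneg (z - w))]
    · rw [hd f d0]
      have := lip_of_deriv_bound d1 h2 (w + x) (z + x)
      simpa using this
    · rw [hd f d0, hd _ d1]
      have := lip_of_deriv_bound d2 h3 (w + x) (z + x)
      simpa using this

lemma genN_bound (f : ℝ → ℝ) (hf : ContDiff ℝ (⊤ : ℕ∞) f) (hc : HasCompactSupport f) :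
    ∃ C, 0 ≤ C ∧ ∀ ν : Measure ℝ, Integrable (fun r : ℝ => min |r| (r ^ 2)) ν →
      (∀ z, |genN ν f z| ≤ C * ∫ r, min |r| (r ^ 2) ∂ν) ∧
      (∀ w z, |genN ν f z - genN ν f w| ≤ (C * ∫ r, min |r| (r ^ 2) ∂ν) * |z - w|) := by
  obtain ⟨C, hC, h1, h2⟩ := nl_bound f hf hc
  refine ⟨C, hC, fun ν hν => ⟨fun z => ?_, fun w z => ?_⟩⟩
  · unfold genN
    rw [← integral_const_mul]
    exact abs_integral_le_of (hν.const_mul _) (fun r => h1 z r)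
  · have hi : ∀ z, Integrable (fun r => f (z + r) - f z - r * deriv f z) ν := by
      intro z
      have := hf.continuous
      exact (hν.const_mul C).mono' (by fun_prop) (Eventually.of_forall fun r => h1 z r)
    unfold genN
    rw [← integral_sub (hi z) (hi w)]
    have := abs_integral_le_of (hν.const_mul (C * |z - w|)) (fun r => h2 w z r)
    rw [integral_const_mul] at this
    linarith

lemma genN_cont (f : ℝ → ℝ) (hf : ContDiff ℝ (⊤ : ℕ∞) f) (hc : HasCompactSupport f) (ν : Measure ℝ)
    (hν : Integrable (fun r : ℝ => min |r| (r ^ 2)) ν) : Continuous (genN ν f) := by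
  obtain ⟨C, hC, h⟩ := genN_bound f hf hc
  have hk : 0 ≤ ∫ r, min |r| (r ^ 2) ∂ν :=
    integral_nonneg fun r => le_min (abs_nonneg r) (sq_nonneg r)
  refine (LipschitzWith.of_dist_le_mul (K := (C * ∫ r, min |r| (r ^ 2) ∂ν).toNNReal)
    fun z w => ?_).continuous
  rw [Real.coe_toNNReal _ (by positivity), Real.dist_eq, Real.dist_eq]
  exact (h ν hν).2 w z

lemma int_of_bdd (μ : Measure ℝ) [IsProbabilityMeasure μ] {g : ℝ → ℝ} (hg : Continuous g) {C : ℝ}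
    (h : ∀ x, |g x| ≤ C) : Integrable g μ :=
  Integrable.of_bound hg.aestronglyMeasurable C (Eventually.of_forall h)

lemma abs_int_le (μ : Measure ℝ) [IsProbabilityMeasure μ] {g : ℝ → ℝ} {C : ℝ}
    (h : ∀ x, |g x| ≤ C) : |∫ x, g x ∂μ| ≤ C := by
  have := abs_integral_le_of (m := μ) (integrable_const C) h
  simpa using this

lemma int_gen {μ : ℝ → Measure ℝ} {A B : ℝ} {ν : Measure ℝ} (h : IsLevy μ A B ν)
    (f : ℝ → ℝ) (hf : ContDiff ℝ (⊤ : ℕ∞) f) (hc : HasCompactSupport f) (s : ℝ) (hs : 0 < s) :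
    ∫ x, gen A B ν f x ∂μ s = A * ∫ x, deriv (deriv f) x ∂μ s + B * ∫ x, deriv f x ∂μ s
      + ∫ x, genN ν f x ∂μ s := by
  have := h.prob s hs
  have hf1 := smooth_deriv hf
  have hf2 := smooth_deriv hf1
  obtain ⟨C1, p1, h1⟩ := bdd_of_cs hf1.continuous hc.deriv
  obtain ⟨C2, p2, h2⟩ := bdd_of_cs hf2.continuous hc.deriv.deriv
  obtain ⟨C, hC, hN⟩ := genN_bound f hf hc
  have i1 := int_of_bdd (μ s) hf1.continuous h1
  have i2 := int_of_bdd (μ s) hf2.continuous h2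
  have i3 := int_of_bdd (μ s) (genN_cont f hf hc ν h.int) (hN ν h.int).1
  have i4 : Integrable (fun x => A * deriv (deriv f) x + B * deriv f x) (μ s) :=
    (i2.const_mul A).add (i1.const_mul B)
  unfold gen
  rw [integral_add i4 i3, integral_add (i2.const_mul A) (i1.const_mul B), integral_const_mul, integral_const_mul]

/-- Second derivative iterated `j` times. -/
def evD (j : ℕ) (f : ℝ → ℝ) : ℝ → ℝ := (fun g => deriv (deriv g))^[j] f

/-- The Gaussian Taylor polynomial. -/
def expo (K : ℕ) (f : ℝ → ℝ) (x : ℝ) : ℝ :=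
  ∑ j ∈ Finset.range K, evD j f 0 * (x ^ j / (j.factorial : ℝ))

lemma evD_succ (j : ℕ) (f : ℝ → ℝ) : evD (j + 1) f = evD j (deriv (deriv f)) := rfl

lemma expo_hasDeriv (K : ℕ) (f : ℝ → ℝ) (A s : ℝ) :
    HasDerivAt (fun s => expo (K + 1) f (A * s)) (A * expo K (deriv (deriv f)) (A * s)) s := by
  unfold expo
  simp_rw [Finset.sum_range_succ' (n := K)]
  have : A * ∑ j ∈ Finset.range K, evD j (deriv (deriv f)) 0 * ((A * s) ^ j / (j.factorial : ℝ)) =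
      ∑ j ∈ Finset.range K, evD (j + 1) f 0 *
        (((((j + 1 : ℕ) : ℝ) * (A * s) ^ j) * A) / ((j + 1).factorial : ℝ)) + 0 := by
    rw [add_zero, Finset.mul_sum]
    refine Finset.sum_congr rfl fun j _ => ?_
    rw [evD_succ, Nat.factorial_succ]
    push_cast
    have : (j.factorial : ℝ) ≠ 0 := by positivity
    field_simp
  rw [this]
  refine HasDerivAt.add (HasDerivAt.fun_sum fun j _ => ?_) (by simpa using hasDerivAt_const s _)
  refine HasDerivAt.const_mul _ (HasDerivAt.div_const ?_ _)
  have h1 : HasDerivAt (fun s => A * s) A s := by simpa using (hasDerivAt_id s).const_mul A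
  simpa using h1.fun_pow (j + 1)

lemma expo_zero (K : ℕ) (f : ℝ → ℝ) : expo (K + 1) f 0 = f 0 := by
  unfold expo
  rw [Finset.sum_range_succ']
  simp [evD]

lemma expansion (K : ℕ) : ∀ (f : ℝ → ℝ), ContDiff ℝ (⊤ : ℕ∞) f → HasCompactSupport f →
    ∃ C, 0 ≤ C ∧ ∀ (μ : ℝ → Measure ℝ) (A B D : ℝ) (ν : Measure ℝ), IsLevy μ A B ν → 0 ≤ A →
      |B| ≤ D → ∫ r, min |r| (r ^ 2) ∂ν ≤ D → ∀ s, 0 < s → A * s ≤ 1 →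
      |∫ x, f x ∂μ s - expo K f (A * s)| ≤ C * ((A * s) ^ K + s * D) := by
  induction K with
  | zero =>
    intro f hf hc
    obtain ⟨C, hC, h⟩ := bdd_of_cs hf.continuous hc
    refine ⟨C, hC, fun μ A B D ν hL hA hB hD s hs _ => ?_⟩
    have := hL.prob s hs
    have h1 := abs_int_le (μ s) h
    have hD0 : 0 ≤ D := (abs_nonneg B).trans hB
    simp only [expo, Finset.range_zero, Finset.sum_empty, sub_zero, pow_zero]
    nlinarith [mul_nonneg hC (mul_nonneg hs.le hD0)]
  | succ K ih =>
    intro f hf hc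
    have hf1 := smooth_deriv hf
    have hf2 := smooth_deriv hf1
    obtain ⟨C1, p1, h1⟩ := bdd_of_cs hf1.continuous hc.deriv
    obtain ⟨C, hC, ihC⟩ := ih _ hf2 hc.deriv.deriv
    obtain ⟨CN, hCN, hN⟩ := genN_bound f hf hc
    refine ⟨C + C1 + CN, by positivity, fun μ A B D ν hL hA hB hD s hs hAs => ?_⟩
    have hD0 : 0 ≤ D := (abs_nonneg B).trans hB
    have key := dynkin_mvt hL f hf hc (fun s => expo (K + 1) f (A * s)) _
      (expo_hasDeriv K f A) (by simp [expo_zero]) s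
      (A * (C * ((A * s) ^ K + s * D)) + (C1 + CN) * D) hs ?_
    · refine key.trans ?_
      have e : s * (A * (C * ((A * s) ^ K + s * D)) + (C1 + CN) * D) =
        C * ((A * s) ^ (K + 1) + (A * s) * (s * D)) + (C1 + CN) * (s * D) := by ring
      rw [e]
      have q1 : 0 ≤ s * D := by positivity
      have q2 : 0 ≤ (A * s) ^ (K + 1) := by positivity
      have q3 : (A * s) * (s * D) ≤ s * D := mul_le_of_le_one_left q1 hAs
      nlinarith [mul_le_mul_of_nonneg_left q3 hC, mul_nonneg p1 q2, mul_nonneg hCN q2]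
    · intro c hc0 hcs
      have := hL.prob c hc0
      rw [int_gen hL f hf hc c hc0]
      have a1 := ihC μ A B D ν hL hA hB hD c hc0
        ((mul_le_mul_of_nonneg_left hcs.le hA).trans hAs)
      have a2 : |B * ∫ x, deriv f x ∂μ c| ≤ D * C1 := by
        rw [abs_mul]
        have := abs_int_le (μ c) h1
        gcongr
      have a3 : |∫ x, genN ν f x ∂μ c| ≤ CN * D := by
        refine (abs_int_le (μ c) (hN ν hL.int).1).trans ?_
        gcongr
      have a4 : C * ((A * c) ^ K + c * D) ≤ C * ((A * s) ^ K + s * D) := by gcongr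
      have a5 : |A * (∫ x, deriv (deriv f) x ∂μ c - expo K (deriv (deriv f)) (A * c))| ≤
          A * (C * ((A * s) ^ K + s * D)) := by
        rw [abs_mul, abs_of_nonneg hA]
        exact mul_le_mul_of_nonneg_left (a1.trans a4) hA
      rw [abs_le] at *
      constructor <;> nlinarith [a5.1, a5.2, a2.1, a2.2, a3.1, a3.2]

lemma main_expansion (K : ℕ) (g : ℝ → ℝ) (hg : ContDiff ℝ (⊤ : ℕ∞) g) (hc : HasCompactSupport g)
    (hg0 : g 0 = 0) (hg1 : deriv g 0 = 0) (δ : ℝ) (hδ : 0 < δ) :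
    ∃ C, 0 ≤ C ∧ ∀ (μ : ℝ → Measure ℝ) (A B D : ℝ) (ν : Measure ℝ), IsLevy μ A B ν → 0 ≤ A →
      |B| ≤ D → ∫ r, min |r| (r ^ 2) ∂ν ≤ D → ∀ s, 0 < s → A * s ≤ 1 →
      |∫ x, g x ∂μ s - (expo (K + 1) g (A * s) + s * ∫ r, g r ∂ν)| ≤
        δ * (s * D) + C * ((A * s) ^ (K + 1) + s * D * (A * s + s * D) + s * |B|) := by
  have hf1 := smooth_deriv hg
  have hf2 := smooth_deriv hf1
  obtain ⟨C1, p1, h1⟩ := bdd_of_cs hf1.continuous hc.deriv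
  obtain ⟨C, hC, ihC⟩ := expansion K _ hf2 hc.deriv.deriv
  obtain ⟨CN, hCN, hN⟩ := genN_bound g hg hc
  have hd : 0 < δ / (CN + 1) := by positivity
  let β : ContDiffBump (0 : ℝ) := ⟨δ / (CN + 1) / 2, δ / (CN + 1), by positivity, by linarith⟩
  have hβs : ContDiff ℝ (⊤ : ℕ∞) (β : ℝ → ℝ) := β.contDiff
  have hβc : HasCompactSupport (β : ℝ → ℝ) := β.hasCompactSupport
  have hβ0 : β 0 = 1 := β.one_of_mem_closedBall (by simp [β]; positivity)
  obtain ⟨Cb, hCb, hb⟩ := expansion 1 _ hβs hβc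
  refine ⟨C + C1 + 2 * CN * Cb, by positivity, fun μ A B D ν hL hA hB hD s hs hAs => ?_⟩
  have hD0 : 0 ≤ D := (abs_nonneg B).trans hB
  have hg0' : genN ν g 0 = ∫ r, g r ∂ν := by
    unfold genN; simp [hg0, hg1]
  have key := dynkin_mvt hL g hg hc (fun s => expo (K + 1) g (A * s) + s * ∫ r, g r ∂ν) _
    (fun s => (expo_hasDeriv K g A s).add ((hasDerivAt_id s).mul_const (∫ r, g r ∂ν)))
    (by simp [expo_zero]) s
    (A * (C * ((A * s) ^ K + s * D)) + C1 * |B| + (δ * D + 2 * CN * D * (Cb * (A * s + s * D)))) hs ?_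
  · refine key.trans ?_
    have q0 : 0 ≤ A * s := by positivity
    have q1 : 0 ≤ s * D := by positivity
    have q2 : 0 ≤ (A * s) ^ (K + 1) := by positivity
    have q3 : 0 ≤ s * |B| := by positivity
    have q4 : 0 ≤ s * D * (A * s + s * D) := by positivity
    have q5 : 0 ≤ s * D * (s * D) := by positivity
    have e : s * (A * (C * ((A * s) ^ K + s * D)) + C1 * |B|
        + (δ * D + 2 * CN * D * (Cb * (A * s + s * D)))) =
        C * ((A * s) ^ (K + 1) + (s * D) * (A * s)) + C1 * (s * |B|) +
        (δ * (s * D) + (2 * CN * Cb) * (s * D * (A * s + s * D))) := by ring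
    rw [e]
    have hCC : 0 ≤ CN * Cb := by positivity
    nlinarith [mul_nonneg hC q5, mul_nonneg hC q3, mul_nonneg p1 q2, mul_nonneg p1 q4,
      mul_nonneg hCC q2, mul_nonneg hCC q3]
  · intro c hc0 hcs
    have := hL.prob c hc0
    rw [int_gen hL g hg hc c hc0]
    have hAc : A * c ≤ A * s := mul_le_mul_of_nonneg_left hcs.le hA
    have a1 := ihC μ A B D ν hL hA hB hD c hc0 (hAc.trans hAs)
    have a2 : |B * ∫ x, deriv g x ∂μ c| ≤ C1 * |B| := by
      rw [abs_mul, mul_comm]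
      have := abs_int_le (μ c) h1
      gcongr
    have a3 : |∫ x, genN ν g x ∂μ c - ∫ r, g r ∂ν| ≤
        δ * D + 2 * CN * D * (Cb * (A * s + s * D)) := by
      have ib : Integrable (β : ℝ → ℝ) (μ c) := int_of_bdd (C := 1) (μ c) hβs.continuous (fun x => by
        rw [abs_of_nonneg β.nonneg]; exact β.le_one)
      have iN := int_of_bdd (μ c) (genN_cont g hg hc ν hL.int) (hN ν hL.int).1
      have e : ∫ x, genN ν g x ∂μ c - ∫ r, g r ∂ν = ∫ x, (genN ν g x - genN ν g 0) ∂μ c := by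
        rw [integral_sub iN (integrable_const _), hg0']; simp
      rw [e]
      have hpt : ∀ x, |genN ν g x - genN ν g 0| ≤ δ * D + 2 * CN * D * (1 - β x) := by
        intro x
        have hk : CN * ∫ r, min |r| (r ^ 2) ∂ν ≤ CN * D := by gcongr
        have hCD : 0 ≤ CN * D := by positivity
        by_cases hx : |x| < δ / (CN + 1)
        · have t1 := (hN ν hL.int).2 0 x
          rw [sub_zero] at t1
          have t2 : (CN * ∫ r, min |r| (r ^ 2) ∂ν) * |x| ≤ (CN * D) * (δ / (CN + 1)) := by gcongr
          have t3 : (CN * D) * (δ / (CN + 1)) ≤ δ * D := by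
            rw [← mul_div_assoc, div_le_iff₀ (by positivity)]
            nlinarith [mul_nonneg hδ.le hD0]
          have t4 : 0 ≤ 2 * CN * D * (1 - β x) := by
            have : 0 ≤ 1 - β x := by linarith [β.le_one (x := x)]
            positivity
          linarith
        · have t0 : β x = 0 := β.zero_of_le_dist (by simpa [β] using not_lt.1 hx)
          rw [t0]
          have t1 := (hN ν hL.int).1 x
          have t2 := (hN ν hL.int).1 0
          have t3 := abs_sub (genN ν g x) (genN ν g 0)
          have : 0 ≤ δ * D := by positivity
          linarith
      have ib1 : Integrable (fun x => 2 * CN * D * (1 - β x)) (μ c) :=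
        ((integrable_const _).sub ib).const_mul _
      have ib2 : Integrable (fun x => δ * D + 2 * CN * D * (1 - β x)) (μ c) :=
        (integrable_const _).add ib1
      have t5 : |∫ x, (genN ν g x - genN ν g 0) ∂μ c| ≤
          ∫ x, (δ * D + 2 * CN * D * (1 - β x)) ∂μ c :=
        abs_integral_le_of ib2 hpt
      have t6 : ∫ x, (δ * D + 2 * CN * D * (1 - β x)) ∂μ c =
          δ * D + 2 * CN * D * (1 - ∫ x, β x ∂μ c) := by
        rw [integral_add (integrable_const _) ib1,
          integral_const_mul (2 * CN * D), integral_sub (integrable_const _) ib]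
        simp
      rw [t6] at t5
      refine t5.trans ?_
      have t7 := hb μ A B D ν hL hA hB hD c hc0 (hAc.trans hAs)
      have t8 : expo 1 β (A * c) = 1 := by simp [expo, evD, hβ0]
      rw [t8, pow_one] at t7
      have t9 : Cb * (A * c + c * D) ≤ Cb * (A * s + s * D) := by gcongr
      have t10 := (abs_le.1 t7).1
      gcongr
      linarith
    have a4 : C * ((A * c) ^ K + c * D) ≤ C * ((A * s) ^ K + s * D) := by gcongr
    have a5 : |A * (∫ x, deriv (deriv g) x ∂μ c - expo K (deriv (deriv g)) (A * c))| ≤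
        A * (C * ((A * s) ^ K + s * D)) := by
      rw [abs_mul, abs_of_nonneg hA]
      exact mul_le_mul_of_nonneg_left (a1.trans a4) hA
    rw [abs_le] at *
    constructor <;> nlinarith [a5.1, a5.2, a2.1, a2.2, a3.1, a3.2]


/-! ### Test functions -/

lemma evD_congr {f p : ℝ → ℝ} (j : ℕ) (h : f =ᶠ[𝓝 0] p) : evD j f =ᶠ[𝓝 0] evD j p := by
  induction j generalizing f p with
  | zero => exact h
  | succ j ih => rw [evD_succ, evD_succ]; exact ih h.deriv.deriv

lemma expo_congr {f p : ℝ → ℝ} (K : ℕ) (h : f =ᶠ[𝓝 0] p) (x : ℝ) : expo K f x = expo K p x := by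
  unfold expo
  refine Finset.sum_congr rfl fun j _ => ?_
  rw [(evD_congr j h).self_of_nhds]

lemma dd_pow4 : deriv (deriv (fun x : ℝ => x ^ 4)) = fun x => 12 * x ^ 2 := by
  have : deriv (fun x : ℝ => x ^ 4) = fun x => 4 * x ^ 3 := by ext x; simp
  rw [this]; ext x; simp; ring

lemma dd_pow2 (c : ℝ) : deriv (deriv (fun x : ℝ => c * x ^ 2)) = fun _ => 2 * c := by
  have : deriv (fun x : ℝ => c * x ^ 2) = fun x => (2 * c) * x := by ext x; simp; ring
  rw [this]; ext x; simp

lemma dd_const (c : ℝ) : deriv (deriv (fun _ : ℝ => c)) = fun _ => 0 := by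
  have : deriv (fun _ : ℝ => c) = fun _ => 0 := by ext x; simp
  rw [this]; ext x; simp

lemma expo_pow4 (x : ℝ) : expo 5 (fun x : ℝ => x ^ 4) x = 12 * x ^ 2 := by
  simp only [expo, Finset.sum_range_succ, Finset.sum_range_zero, evD_succ, dd_pow4, dd_pow2, dd_const]
  simp [evD]; ring

lemma expo_pow2 (x : ℝ) : expo 5 (fun x : ℝ => x ^ 2) x = 2 * x := by
  have : (fun x : ℝ => x ^ 2) = fun x => 1 * x ^ 2 := by ext; simp
  rw [this]
  simp only [expo, Finset.sum_range_succ, Finset.sum_range_zero, evD_succ, dd_pow2, dd_const]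
  simp [evD]

/-- test function `x ^ m` times a bump. -/
def tf (m : ℕ) (β : ContDiffBump (0 : ℝ)) (x : ℝ) : ℝ := x ^ m * β x

lemma tf_smooth (m : ℕ) (β : ContDiffBump (0 : ℝ)) : ContDiff ℝ (⊤ : ℕ∞) (tf m β) := by
  unfold tf
  exact (contDiff_id.pow m).mul β.contDiff

lemma tf_cs (m : ℕ) (β : ContDiffBump (0 : ℝ)) : HasCompactSupport (tf m β) := by
  unfold tf
  exact β.hasCompactSupport.mul_left

lemma tf_germ (m : ℕ) (β : ContDiffBump (0 : ℝ)) : tf m β =ᶠ[𝓝 0] fun x => x ^ m := by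
  filter_upwards [β.eventuallyEq_one] with x hx
  simp [tf, hx]

/-! ### Scaled Lévy measure -/

lemma integrable_of_halves {f : ℝ → ℝ} (h1 : IntegrableOn f (Ioi 0))
    (h2 : IntegrableOn (fun x => f (-x)) (Ioi 0)) : Integrable f := by
  have a1 := (integrable_indicator_iff (measurableSet_Ioi (a := (0 : ℝ)))).2 h1
  have a2 := ((integrable_indicator_iff (measurableSet_Ioi (a := (0 : ℝ)))).2 h2).comp_neg
  refine (a1.add a2).congr ?_
  have : ∀ᵐ x : ℝ, x ≠ 0 := by simp [ae_iff]
  filter_upwards [this] with x hx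
  rcases lt_or_gt_of_ne hx with h | h
  · simp [Set.indicator, h, not_lt.2 h.le]
  · simp [Set.indicator, h, not_lt.2 h.le]

lemma integral_halves {f : ℝ → ℝ} (hf : Integrable f) :
    ∫ x, f x = (∫ x in Ioi 0, f x) + ∫ x in Ioi 0, f (-x) := by
  rw [integral_comp_neg_Ioi, neg_zero, add_comm]
  exact (intervalIntegral.integral_Iic_add_Ioi hf.integrableOn hf.integrableOn).symm

lemma kernel_integrable (Y : ℝ) (hY1 : 1 < Y) (hY2 : Y < 2) :
    Integrable (fun r : ℝ => min |r| (r ^ 2) * |r| ^ (-1 - Y)) := by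
  have h : IntegrableOn (fun r : ℝ => min |r| (r ^ 2) * |r| ^ (-1 - Y)) (Ioi 0) := by
    rw [← Ioc_union_Ioi_eq_Ioi (zero_le_one (α := ℝ))]
    refine IntegrableOn.union ?_ ?_
    · have h1 : IntegrableOn (fun r : ℝ => r ^ (1 - Y)) (Ioc 0 1) :=
        (intervalIntegrable_iff_integrableOn_Ioc_of_le zero_le_one).1
          (intervalIntegral.intervalIntegrable_rpow' (by linarith))
      refine h1.congr_fun (fun r hr => ?_) measurableSet_Ioc
      have hr0 : 0 < r := hr.1
      simp only [abs_of_pos hr0]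
      rw [min_eq_right (by nlinarith [hr.2]), ← Real.rpow_natCast, ← Real.rpow_add hr0]
      congr 1; push_cast; ring
    · have h1 : IntegrableOn (fun r : ℝ => r ^ (-Y)) (Ioi 1) :=
        integrableOn_Ioi_rpow_of_lt (by linarith) one_pos
      refine h1.congr_fun (fun r hr => ?_) measurableSet_Ioi
      have hr1 : 1 < r := hr
      have hr0 : 0 < r := by linarith
      simp only [abs_of_pos hr0]
      rw [min_eq_left (by nlinarith)]
      nth_rewrite 2 [← Real.rpow_one r]
      rw [← Real.rpow_add hr0]
      congr 1; ring
  refine integrable_of_halves h ?_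
  simpa using h

/-- The sign-dependent constant. -/
def cSgn (Cp Cm x : ℝ) : ℝ := if 0 < x then Cp else if x < 0 then Cm else 0

lemma cSgn_meas (Cp Cm : ℝ) : Measurable (cSgn Cp Cm) := by
  unfold cSgn
  exact Measurable.ite measurableSet_Ioi measurable_const
    (Measurable.ite measurableSet_Iio measurable_const measurable_const)

lemma cSgn_nonneg {Cp Cm : ℝ} (hCp : 0 < Cp) (hCm : 0 < Cm) (x : ℝ) : 0 ≤ cSgn Cp Cm x := by
  unfold cSgn; split_ifs <;> linarith

lemma cSgn_le {Cp Cm : ℝ} (hCp : 0 < Cp) (hCm : 0 < Cm) (x : ℝ) : cSgn Cp Cm x ≤ Cp + Cm := by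
  unfold cSgn; split_ifs <;> linarith

lemma levyDensity_eq (Y Cp Cm : ℝ) (q : ℝ → ℝ) (x : ℝ) :
    levyDensity Y Cp Cm q x = cSgn Cp Cm x * q x * |x| ^ (-1 - Y) := rfl

lemma levyDensity_meas (Y Cp Cm : ℝ) {q : ℝ → ℝ} (hq : Measurable q) :
    Measurable (levyDensity Y Cp Cm q) := by
  have := cSgn_meas Cp Cm
  have h : levyDensity Y Cp Cm q = fun x => cSgn Cp Cm x * q x * |x| ^ (-1 - Y) := rfl
  rw [h]
  fun_prop

lemma levyDensity_nonneg (Y : ℝ) {Cp Cm : ℝ} (hCp : 0 < Cp) (hCm : 0 < Cm) {q : ℝ → ℝ}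
    (hq : ∀ x, 0 ≤ q x) (x : ℝ) : 0 ≤ levyDensity Y Cp Cm q x := by
  rw [levyDensity_eq]
  have := cSgn_nonneg hCp hCm x
  have := hq x
  positivity

lemma levy_integrable_iff (Y : ℝ) {Cp Cm : ℝ} (hCp : 0 < Cp) (hCm : 0 < Cm) {q : ℝ → ℝ}
    (hqm : Measurable q) (hq : ∀ x, 0 ≤ q x) (g : ℝ → ℝ) :
    Integrable g (levyMeasure Y Cp Cm q) ↔ Integrable (fun x => levyDensity Y Cp Cm q x * g x) := by
  unfold levyMeasure
  rw [integrable_withDensity_iff_integrable_smul' (levyDensity_meas Y Cp Cm hqm).ennreal_ofReal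
    (Eventually.of_forall fun x => ENNReal.ofReal_lt_top)]
  simp only [ENNReal.toReal_ofReal (levyDensity_nonneg Y hCp hCm hq _), smul_eq_mul]

lemma levy_integral (Y : ℝ) {Cp Cm : ℝ} (hCp : 0 < Cp) (hCm : 0 < Cm) {q : ℝ → ℝ}
    (hqm : Measurable q) (hq : ∀ x, 0 ≤ q x) (g : ℝ → ℝ) :
    ∫ x, g x ∂(levyMeasure Y Cp Cm q) = ∫ x, levyDensity Y Cp Cm q x * g x := by
  unfold levyMeasure
  rw [integral_withDensity_eq_integral_toReal_smul (levyDensity_meas Y Cp Cm hqm).ennreal_ofReal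
    (Eventually.of_forall fun x => ENNReal.ofReal_lt_top)]
  simp only [ENNReal.toReal_ofReal (levyDensity_nonneg Y hCp hCm hq _), smul_eq_mul]

/-- Scaled Lévy measure -/
def nuS (Y Cp Cm : ℝ) (q : ℝ → ℝ) (e : ℝ) : Measure ℝ :=
  (levyMeasure Y Cp Cm q).map (fun y => e⁻¹ * y)

instance (Y Cp Cm : ℝ) (q : ℝ → ℝ) : SFinite (levyMeasure Y Cp Cm q) := by
  unfold levyMeasure; infer_instance

instance (Y Cp Cm : ℝ) (q : ℝ → ℝ) (e : ℝ) : SFinite (nuS Y Cp Cm q e) := by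
  unfold nuS; infer_instance

lemma nuS_K (Y : ℝ) (hY1 : 1 < Y) (hY2 : Y < 2) {Cp Cm : ℝ} (hCp : 0 < Cp) (hCm : 0 < Cm)
    {q : ℝ → ℝ} (hqm : Measurable q) (hq : ∀ x, 0 ≤ q x) (hqb : ∃ M : ℝ, ∀ x, q x ≤ M) :
    ∃ C0, 0 ≤ C0 ∧ ∀ e, 0 < e → Integrable (fun r : ℝ => min |r| (r ^ 2)) (nuS Y Cp Cm q e) ∧
      ∫ r, min |r| (r ^ 2) ∂(nuS Y Cp Cm q e) ≤ C0 * e ^ (-Y) := by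
  obtain ⟨M, hM⟩ := hqb
  have hM0 : 0 ≤ M := (hq 0).trans (hM 0)
  set k : ℝ → ℝ := fun r : ℝ => min |r| (r ^ 2) * |r| ^ (-1 - Y) with hk
  have hki : Integrable k := kernel_integrable Y hY1 hY2
  have hk0 : ∀ r, 0 ≤ k r := fun r =>
    mul_nonneg (le_min (abs_nonneg r) (sq_nonneg r)) (by positivity)
  refine ⟨(Cp + Cm) * M * ∫ r, k r, mul_nonneg (by positivity) (integral_nonneg hk0),
    fun e he => ?_⟩
  have hmm : Measurable (fun r : ℝ => min |r| (r ^ 2)) := by fun_prop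
  have hpt : ∀ y, |levyDensity Y Cp Cm q y * min |e⁻¹ * y| ((e⁻¹ * y) ^ 2)| ≤
      ((Cp + Cm) * M * e ^ (-1 - Y)) * k (e⁻¹ * y) := by
    intro y
    have hm0 : 0 ≤ min |e⁻¹ * y| ((e⁻¹ * y) ^ 2) := le_min (abs_nonneg _) (sq_nonneg _)
    rw [abs_of_nonneg (mul_nonneg (levyDensity_nonneg Y hCp hCm hq y) hm0), levyDensity_eq, hk]
    simp only
    have e1 : |y| ^ (-1 - Y) = e ^ (-1 - Y) * |e⁻¹ * y| ^ (-1 - Y) := by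
      rw [← Real.mul_rpow he.le (abs_nonneg _), abs_mul, abs_of_pos (inv_pos.2 he),
        mul_inv_cancel_left₀ he.ne']
    rw [e1]
    have e2 : cSgn Cp Cm y * q y ≤ (Cp + Cm) * M :=
      mul_le_mul (cSgn_le hCp hCm y) (hM y) (hq y) (by positivity)
    calc _ = (cSgn Cp Cm y * q y) * (e ^ (-1 - Y) * (min |e⁻¹ * y| ((e⁻¹ * y) ^ 2) *
          |e⁻¹ * y| ^ (-1 - Y))) := by ring
      _ ≤ ((Cp + Cm) * M) * (e ^ (-1 - Y) * (min |e⁻¹ * y| ((e⁻¹ * y) ^ 2) *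
          |e⁻¹ * y| ^ (-1 - Y))) := by
          refine mul_le_mul_of_nonneg_right e2 ?_
          exact mul_nonneg (by positivity) (mul_nonneg hm0 (by positivity))
      _ = _ := by ring
  have hint : Integrable (fun y => ((Cp + Cm) * M * e ^ (-1 - Y)) * k (e⁻¹ * y)) :=
    (hki.comp_mul_left' (inv_pos.2 he).ne').const_mul _
  have hdm := levyDensity_meas Y Cp Cm hqm
  have hint2 : Integrable (fun y => levyDensity Y Cp Cm q y * min |e⁻¹ * y| ((e⁻¹ * y) ^ 2)) :=
    hint.mono' (by fun_prop) (Eventually.of_forall hpt)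
  constructor
  · unfold nuS
    rw [integrable_map_measure hmm.aestronglyMeasurable (by fun_prop)]
    rw [levy_integrable_iff Y hCp hCm hqm hq]
    exact hint2
  · unfold nuS
    rw [integral_map (by fun_prop) hmm.aestronglyMeasurable, levy_integral Y hCp hCm hqm hq]
    refine (le_abs_self _).trans ((abs_integral_le_of hint hpt).trans ?_)
    rw [integral_const_mul, Measure.integral_comp_mul_left, inv_inv, abs_of_pos he, smul_eq_mul]
    have : e ^ (-Y) = e ^ (-1 - Y) * e := by
      nth_rewrite 3 [← Real.rpow_one e]
      rw [← Real.rpow_add he]; congr 1; ring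
    rw [this]
    apply le_of_eq; ring

lemma pow_int (Y ρ : ℝ) (hY2 : Y < 2) (hρ : 0 < ρ) (c : ℝ) :
    IntegrableOn (fun x : ℝ => Set.indicator {x | |x| ≤ ρ} (fun x => c * |x| ^ (3 - Y)) x) (Ioi 0) ∧
    ∫ x in Ioi (0 : ℝ), Set.indicator {x | |x| ≤ ρ} (fun x => c * |x| ^ (3 - Y)) x =
      c * (ρ ^ (4 - Y) / (4 - Y)) := by
  have hS : MeasurableSet {x : ℝ | |x| ≤ ρ} := measurableSet_le (by fun_prop) (by fun_prop)
  have hinter : {x : ℝ | |x| ≤ ρ} ∩ Ioi 0 = Ioc 0 ρ := by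
    ext x; simp only [Set.mem_inter_iff, Set.mem_setOf_eq, Set.mem_Ioi, Set.mem_Ioc]
    constructor
    · rintro ⟨h1, h2⟩; exact ⟨h2, (le_abs_self x).trans h1⟩
    · rintro ⟨h1, h2⟩; exact ⟨by rwa [abs_of_pos h1], h1⟩
  have hi : IntegrableOn (fun x : ℝ => c * |x| ^ (3 - Y)) (Ioc 0 ρ) := by
    have h1 : IntegrableOn (fun r : ℝ => r ^ (3 - Y)) (Ioc 0 ρ) :=
      (intervalIntegrable_iff_integrableOn_Ioc_of_le hρ.le).1
        (intervalIntegral.intervalIntegrable_rpow' (by linarith))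
    have h2 : IntegrableOn (fun r : ℝ => c * r ^ (3 - Y)) (Ioc 0 ρ) := h1.const_mul c
    exact h2.congr_fun (fun r hr => by simp [abs_of_pos hr.1]) measurableSet_Ioc
  constructor
  · rw [integrableOn_indicator_iff hS, hinter]
    exact hi
  · rw [setIntegral_indicator hS, Set.inter_comm, hinter]
    rw [integral_const_mul]
    congr 1
    have : ∫ x in Ioc 0 ρ, |x| ^ (3 - Y) = ∫ x in Ioc 0 ρ, x ^ (3 - Y) :=
      setIntegral_congr_fun measurableSet_Ioc (fun x hx => by simp only [abs_of_pos hx.1])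
    rw [this, ← intervalIntegral.integral_of_le hρ.le, integral_rpow (Or.inl (by linarith)),
      Real.zero_rpow (by linarith), sub_zero]
    rw [show (3 : ℝ) - Y + 1 = 4 - Y by ring]

lemma cpow_int (Y ρ : ℝ) (hY2 : Y < 2) (hρ : 0 < ρ) (Cp Cm : ℝ) :
    Integrable (fun x : ℝ => Set.indicator {x | |x| ≤ ρ} (fun x => cSgn Cp Cm x * |x| ^ (3 - Y)) x) ∧
    ∫ x : ℝ, Set.indicator {x | |x| ≤ ρ} (fun x => cSgn Cp Cm x * |x| ^ (3 - Y)) x =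
      (Cp + Cm) * (ρ ^ (4 - Y) / (4 - Y)) := by
  have e1 : Set.EqOn (fun x : ℝ => Set.indicator {x | |x| ≤ ρ} (fun x => Cp * |x| ^ (3 - Y)) x)
      (fun x : ℝ => Set.indicator {x | |x| ≤ ρ} (fun x => cSgn Cp Cm x * |x| ^ (3 - Y)) x) (Ioi 0) := by
    intro x hx
    have hx' : 0 < x := hx
    simp [Set.indicator, cSgn, hx']
  have e2 : Set.EqOn (fun x : ℝ => Set.indicator {x | |x| ≤ ρ} (fun x => Cm * |x| ^ (3 - Y)) x)
      (fun x : ℝ => Set.indicator {x | |x| ≤ ρ} (fun x => cSgn Cp Cm x * |x| ^ (3 - Y)) (-x)) (Ioi 0) := by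
    intro x hx
    have hx' : 0 < x := hx
    simp [Set.indicator, cSgn, hx', not_lt.2 hx'.le]
  have p1 := pow_int Y ρ hY2 hρ Cp
  have p2 := pow_int Y ρ hY2 hρ Cm
  have hi := integrable_of_halves (p1.1.congr_fun e1 measurableSet_Ioi)
    (p2.1.congr_fun e2 measurableSet_Ioi)
  refine ⟨hi, ?_⟩
  rw [integral_halves hi, ← setIntegral_congr_fun measurableSet_Ioi e1,
    ← setIntegral_congr_fun measurableSet_Ioi e2, p1.2, p2.2]
  ring

lemma nuS_fourth (Y : ℝ) (hY1 : 1 < Y) (hY2 : Y < 2) {Cp Cm : ℝ} (hCp : 0 < Cp) (hCm : 0 < Cm)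
    {q : ℝ → ℝ} (hqm : Measurable q) (hq : ∀ x, 0 ≤ q x)
    (hq_lim : Tendsto q (𝓝[≠] (0 : ℝ)) (𝓝 1)) (η : ℝ) (hη : 0 < η) :
    ∃ e0, 0 < e0 ∧ ∀ e, 0 < e → e < e0 → ∀ R, 0 < R → R ≤ 2 →
      Integrable (Set.indicator {x : ℝ | |x| ≤ R} (fun x => x ^ 4)) (nuS Y Cp Cm q e) ∧
      |∫ r, Set.indicator {x : ℝ | |x| ≤ R} (fun x => x ^ 4) r ∂(nuS Y Cp Cm q e) -
        (Cp + Cm) / (4 - Y) * R ^ (4 - Y) * e ^ (-Y)| ≤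
        η * ((Cp + Cm) / (4 - Y) * R ^ (4 - Y) * e ^ (-Y)) := by
  have := Metric.tendsto_nhdsWithin_nhds.1 hq_lim η hη
  obtain ⟨d, hd, hqd⟩ := this
  refine ⟨d / 2, by positivity, fun e he hed R hR hR2 => ?_⟩
  have hS : MeasurableSet {x : ℝ | |x| ≤ R} := measurableSet_le (by fun_prop) (by fun_prop)
  have hmm : Measurable (Set.indicator {x : ℝ | |x| ≤ R} (fun x => x ^ 4)) :=
    Measurable.indicator (by fun_prop) hS
  have hRe : 0 < R * e := by positivity
  obtain ⟨hci, hcv⟩ := cpow_int Y (R * e) hY2 hRe Cp Cm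
  set H : ℝ → ℝ := fun x : ℝ =>
    Set.indicator {x | |x| ≤ R * e} (fun x => cSgn Cp Cm x * |x| ^ (3 - Y)) x with hH
  set T : ℝ → ℝ := fun y => levyDensity Y Cp Cm q y *
    Set.indicator {x : ℝ | |x| ≤ R} (fun x => x ^ 4) (e⁻¹ * y) with hT
  have hpt : ∀ y, |T y - (e ^ 4)⁻¹ * H y| ≤ η * (e ^ 4)⁻¹ * H y := by
    intro y
    have hiff : |e⁻¹ * y| ≤ R ↔ |y| ≤ R * e := by
      rw [abs_mul, abs_of_pos (inv_pos.2 he), inv_mul_le_iff₀ he, mul_comm]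
    by_cases hy : |y| ≤ R * e
    · have hTy : T y = levyDensity Y Cp Cm q y * (e⁻¹ * y) ^ 4 := by
        simp only [hT]; rw [Set.indicator_of_mem (show e⁻¹ * y ∈ {x : ℝ | |x| ≤ R} from hiff.2 hy)]
      have hHy : H y = cSgn Cp Cm y * |y| ^ (3 - Y) := by
        simp only [hH]; rw [Set.indicator_of_mem (show y ∈ {x : ℝ | |x| ≤ R * e} from hy)]
      by_cases hy0 : y = 0
      · subst hy0
        rw [hTy, hHy]; simp [cSgn]
      · have hpw : |y| ^ (-1 - Y) * y ^ 4 = |y| ^ (3 - Y) := by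
          have : y ^ 4 = |y| ^ (4 : ℝ) := by
            rw [show (4 : ℝ) = ((4 : ℕ) : ℝ) by norm_num, Real.rpow_natCast]
            exact (Even.pow_abs (by decide) y).symm
          rw [this, ← Real.rpow_add (abs_pos.2 hy0)]
          congr 1; ring
        have hqy := hqd (x := y) hy0 (by
          rw [dist_zero_right, Real.norm_eq_abs]
          refine hy.trans_lt ?_
          nlinarith)
        rw [Real.dist_eq] at hqy
        have hH0 : 0 ≤ H y := by
          rw [hHy]; exact mul_nonneg (cSgn_nonneg hCp hCm y) (by positivity)
        have : T y - (e ^ 4)⁻¹ * H y = (q y - 1) * ((e ^ 4)⁻¹ * H y) := by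
          rw [hTy, hHy, levyDensity_eq, ← hpw]
          field_simp
        rw [this, abs_mul, abs_of_nonneg (a := (e ^ 4)⁻¹ * H y) (by positivity), mul_assoc]
        gcongr
    · have hTy : T y = 0 := by
        simp only [hT]; rw [Set.indicator_of_notMem (show e⁻¹ * y ∉ {x : ℝ | |x| ≤ R} from
          fun h => hy (hiff.1 h)), mul_zero]
      have hHy : H y = 0 := by
        simp only [hH]; rw [Set.indicator_of_notMem (show y ∉ {x : ℝ | |x| ≤ R * e} from hy)]
      rw [hTy, hHy]; simp
  have hdm := levyDensity_meas Y Cp Cm hqm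
  have hTm : Measurable T := hdm.mul (hmm.comp (by fun_prop))
  have hdi : Integrable (fun y => T y - (e ^ 4)⁻¹ * H y) := by
    refine (hci.const_mul (η * (e ^ 4)⁻¹)).mono' ?_ (Eventually.of_forall hpt)
    exact hTm.aestronglyMeasurable.sub (hci.const_mul _).aestronglyMeasurable
  have hTi : Integrable T := by
    have := hdi.add (hci.const_mul (e ^ 4)⁻¹)
    refine this.congr (Eventually.of_forall fun y => ?_)
    simp [hH]
  have hval : (e ^ 4)⁻¹ * ∫ y, H y = (Cp + Cm) / (4 - Y) * R ^ (4 - Y) * e ^ (-Y) := by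
    rw [hcv, Real.mul_rpow hR.le he.le]
    have : e ^ (4 - Y) = e ^ 4 * e ^ (-Y) := by
      rw [← Real.rpow_natCast e 4, ← Real.rpow_add he]; congr 1
    rw [this]
    have : 4 - Y ≠ 0 := by linarith
    field_simp
  constructor
  · unfold nuS
    rw [integrable_map_measure hmm.aestronglyMeasurable (by fun_prop)]
    rw [levy_integrable_iff Y hCp hCm hqm hq]
    exact hTi
  · have hI : ∫ r, Set.indicator {x : ℝ | |x| ≤ R} (fun x => x ^ 4) r ∂(nuS Y Cp Cm q e) =
        ∫ y, T y := by
      unfold nuS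
      rw [integral_map (by fun_prop) hmm.aestronglyMeasurable, levy_integral Y hCp hCm hqm hq]
    rw [hI, ← hval, ← integral_const_mul, ← integral_sub hTi (hci.const_mul _),
      ← integral_const_mul]
    have h := abs_integral_le_of (hci.const_mul (η * (e ^ 4)⁻¹)) hpt
    simp_rw [← mul_assoc]
    exact h


/-! ### The rescaled process -/

lemma levy_min_integrable (Y : ℝ) (hY1 : 1 < Y) (hY2 : Y < 2) {Cp Cm : ℝ} (hCp : 0 < Cp)
    (hCm : 0 < Cm) {q : ℝ → ℝ} (hqm : Measurable q) (hq : ∀ x, 0 ≤ q x)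
    (hqb : ∃ M : ℝ, ∀ x, q x ≤ M) :
    Integrable (fun r : ℝ => min |r| (r ^ 2)) (levyMeasure Y Cp Cm q) := by
  obtain ⟨C0, -, h⟩ := nuS_K Y hY1 hY2 hCp hCm hqm hq hqb
  have := (h 1 one_pos).1
  simpa [nuS] using this

/-- The drift after full compensation. -/
def bT (b Y Cp Cm : ℝ) (q : ℝ → ℝ) : ℝ :=
  b + ∫ x, Set.indicator {x : ℝ | 1 < |x|} (fun x => x) x ∂(levyMeasure Y Cp Cm q)

lemma comp_integrable {ν : Measure ℝ} (hint : Integrable (fun r : ℝ => min |r| (r ^ 2)) ν)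
    (u : ℝ) :
    Integrable (fun r : ℝ => Complex.exp (u * r * Complex.I) - 1 - u * r * Complex.I) ν := by
  refine (hint.const_mul (2 * (|u| + |u| ^ 2))).mono' ?_
    (Eventually.of_forall fun r => exp_comp_bound2 u r)
  exact (by fun_prop : Continuous fun r : ℝ =>
    Complex.exp (u * r * Complex.I) - 1 - u * r * Complex.I).aestronglyMeasurable

lemma psiJ_eq (b Y Cp Cm : ℝ) (q : ℝ → ℝ)
    (hint : Integrable (fun r : ℝ => min |r| (r ^ 2)) (levyMeasure Y Cp Cm q)) (u : ℝ) :
    psiJ b Y Cp Cm q u = bT b Y Cp Cm q * u * Complex.I +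
      ∫ r : ℝ, (Complex.exp (u * r * Complex.I) - 1 - u * r * Complex.I)
        ∂(levyMeasure Y Cp Cm q) := by
  have hS : MeasurableSet {x : ℝ | 1 < |x|} := measurableSet_lt (by fun_prop) (by fun_prop)
  have hi : Integrable (Set.indicator {x : ℝ | 1 < |x|} (fun x => x)) (levyMeasure Y Cp Cm q) := by
    refine hint.mono' (measurable_id.indicator hS).aestronglyMeasurable
      (Eventually.of_forall fun x => ?_)
    by_cases hx : 1 < |x|
    · rw [Set.indicator_of_mem (show x ∈ {x : ℝ | 1 < |x|} from hx), Real.norm_eq_abs]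
      refine le_min le_rfl ?_
      rw [← sq_abs]; nlinarith
    · rw [Set.indicator_of_notMem (show x ∉ {x : ℝ | 1 < |x|} from hx), norm_zero]
      positivity
  have hic : Integrable (fun x : ℝ =>
      (u * Complex.I) * ((Set.indicator {x : ℝ | 1 < |x|} (fun x => x) x : ℝ) : ℂ))
      (levyMeasure Y Cp Cm q) := hi.ofReal.const_mul _
  have hpt : ∀ x : ℝ, (Complex.exp (Complex.I * u * x) - 1 -
      (if |x| ≤ 1 then Complex.I * u * x else 0)) =
      (Complex.exp (u * x * Complex.I) - 1 - u * x * Complex.I) +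
      (u * Complex.I) * ((Set.indicator {x : ℝ | 1 < |x|} (fun x => x) x : ℝ) : ℂ) := by
    intro x
    rw [show Complex.I * u * x = u * x * Complex.I by ring]
    by_cases hx : 1 < |x|
    · rw [Set.indicator_of_mem (show x ∈ {x : ℝ | 1 < |x|} from hx), if_neg (not_le.2 hx)]; ring
    · rw [Set.indicator_of_notMem (show x ∉ {x : ℝ | 1 < |x|} from hx), if_pos (not_lt.1 hx)]
      simp
  unfold psiJ
  simp_rw [hpt]
  rw [integral_add (comp_integrable hint u) hic, integral_const_mul, integral_complex_ofReal, bT]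
  push_cast
  ring

lemma levExp_scale (a c Y Cp Cm : ℝ) (q : ℝ → ℝ) (e : ℝ) (u : ℝ) :
    levExp (a / e ^ 2) (c / e) (nuS Y Cp Cm q e) u =
      levExp a c (levyMeasure Y Cp Cm q) (e⁻¹ * u) := by
  unfold levExp nuS
  rw [integral_map (by fun_prop) (by fun_prop)]
  push_cast
  congr 1
  · ring
  · congr 1; ext r; 
    rw [show (u : ℂ) * ((e : ℂ)⁻¹ * r) * Complex.I = (e : ℂ)⁻¹ * u * r * Complex.I by ring]

/-- the law of the rescaled increment -/
def muS {Ω : Type*} [MeasurableSpace Ω] (P : Measure Ω) (σ : ℝ) (J : ℝ → Ω → ℝ) (W : Ω → ℝ)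
    (e : ℝ) (s : ℝ) : Measure ℝ :=
  P.map (fun ω => e⁻¹ * (σ * Real.sqrt s * W ω + J s ω))

lemma isLevy_muS {Ω : Type*} [MeasurableSpace Ω] (P : Measure Ω) [IsProbabilityMeasure P]
    (Y Cp Cm σ b : ℝ) (q : ℝ → ℝ)
    (hY1 : 1 < Y) (hY2 : Y < 2) (hCp : 0 < Cp) (hCm : 0 < Cm)
    (hqm : Measurable q) (hq : ∀ x, 0 ≤ q x) (hqb : ∃ M : ℝ, ∀ x, q x ≤ M)
    (J : ℝ → Ω → ℝ) (W : Ω → ℝ)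
    (hWmeas : Measurable W) (hW : P.map W = gaussianReal 0 1)
    (hJmeas : ∀ h : ℝ, Measurable (J h))
    (hJcf : ∀ h : ℝ, 0 < h → ∀ u : ℝ,
      ∫ ω, Complex.exp (Complex.I * u * J h ω) ∂P = Complex.exp (h * psiJ b Y Cp Cm q u))
    (hindep : ∀ h : ℝ, 0 < h → IndepFun W (J h) P) (e : ℝ) (he : 0 < e) :
    IsLevy (muS P σ J W e) (σ ^ 2 / 2 / e ^ 2) (bT b Y Cp Cm q / e) (nuS Y Cp Cm q e) := by
  obtain ⟨C0, -, hK⟩ := nuS_K Y hY1 hY2 hCp hCm hqm hq hqb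
  have hint := levy_min_integrable Y hY1 hY2 hCp hCm hqm hq hqb
  refine ⟨fun s hs => ?_, inferInstance, (hK e he).1, fun s hs u => ?_⟩
  · have := hJmeas s
    exact Measure.isProbabilityMeasure_map (by fun_prop)
  · have hJs := hJmeas s
    rw [levExp_scale]
    have hind : IndepFun (fun ω => σ * Real.sqrt s * W ω) (J s) P :=
      (hindep s hs).comp (φ := fun x => σ * Real.sqrt s * x) (ψ := id) (by fun_prop) measurable_id
    have h1 : muS P σ J W e s =
        (P.map ((fun ω => σ * Real.sqrt s * W ω) + J s)).map (fun x => e⁻¹ * x) := by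
      unfold muS
      rw [Measure.map_map (by fun_prop) (by fun_prop)]
      rfl
    have h2 : P.map (fun ω => σ * Real.sqrt s * W ω) =
        (gaussianReal 0 1).map (fun x => σ * Real.sqrt s * x) := by
      rw [← hW, Measure.map_map (by fun_prop) (by fun_prop)]
      rfl
    rw [h1, charFun_map_mul, hind.charFun_map_add_eq_mul (by fun_prop) (by fun_prop), Pi.mul_apply,
      h2, charFun_map_mul, charFun_gaussianReal, charFun_apply_real,
      integral_map (by fun_prop) (by fun_prop)]
    set v := e⁻¹ * u with hv
    have h3 : ∫ ω, Complex.exp (v * (J s ω) * Complex.I) ∂P =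
        Complex.exp (s * psiJ b Y Cp Cm q v) := by
      rw [← hJcf s hs v]
      congr 1; ext ω; congr 1; ring
    rw [h3, ← Complex.exp_add, psiJ_eq _ _ _ _ _ hint]
    congr 1
    unfold levExp
    have : ((Real.sqrt s : ℝ) : ℂ) ^ 2 = s := by
      rw [← Complex.ofReal_pow, Real.sq_sqrt hs.le]
    push_cast
    linear_combination (-(σ : ℂ) ^ 2 * v ^ 2 / 2) * this

/-! ### Truncated moments -/

/-- truncated power -/
def tp (m : ℕ) (R : ℝ) : ℝ → ℝ := Set.indicator {x : ℝ | |x| ≤ R} (fun x => x ^ m)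

lemma tp_meas (m : ℕ) (R : ℝ) : Measurable (tp m R) := by
  have hS : MeasurableSet {x : ℝ | |x| ≤ R} := measurableSet_le (by fun_prop) (by fun_prop)
  exact (by fun_prop : Measurable fun x : ℝ => x ^ m).indicator hS

lemma tp_of_le (m : ℕ) {R x : ℝ} (h : |x| ≤ R) : tp m R x = x ^ m :=
  Set.indicator_of_mem (show x ∈ {x : ℝ | |x| ≤ R} from h) _

lemma tp_of_not (m : ℕ) {R x : ℝ} (h : ¬ |x| ≤ R) : tp m R x = 0 :=
  Set.indicator_of_notMem (show x ∉ {x : ℝ | |x| ≤ R} from h) _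

lemma tp_abs_le (m : ℕ) {R : ℝ} (hR : 0 ≤ R) (x : ℝ) : |tp m R x| ≤ R ^ m := by
  by_cases h : |x| ≤ R
  · rw [tp_of_le m h, abs_pow]; gcongr
  · rw [tp_of_not m h]; simp; positivity

lemma tp_nonneg {m : ℕ} (hm : Even m) (R x : ℝ) : 0 ≤ tp m R x :=
  Set.indicator_nonneg (fun y _ => hm.pow_nonneg y) x

lemma tp_integrable (m : ℕ) {R : ℝ} (hR : 0 ≤ R) (μ : Measure ℝ) [IsProbabilityMeasure μ] :
    Integrable (tp m R) μ :=
  (integrable_const (R ^ m)).mono' (tp_meas m R).aestronglyMeasurable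
    (Eventually.of_forall fun x => tp_abs_le m hR x)

lemma tf_le_tp {m : ℕ} (hm : Even m) (β : ContDiffBump (0 : ℝ)) (x : ℝ) :
    tf m β x ≤ tp m β.rOut x := by
  by_cases h : |x| ≤ β.rOut
  · rw [tp_of_le m h, tf]
    exact mul_le_of_le_one_right (hm.pow_nonneg x) β.le_one
  · rw [tp_of_not m h, tf, β.zero_of_le_dist (by simpa using (not_le.1 h).le), mul_zero]

lemma tp_le_tf {m : ℕ} (hm : Even m) (β : ContDiffBump (0 : ℝ)) (x : ℝ) :
    tp m β.rIn x ≤ tf m β x := by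
  by_cases h : |x| ≤ β.rIn
  · rw [tp_of_le m h, tf, β.one_of_mem_closedBall (by simpa using h), mul_one]
  · rw [tp_of_not m h, tf]
    exact mul_nonneg (hm.pow_nonneg x) β.nonneg

lemma tf_nonneg {m : ℕ} (hm : Even m) (β : ContDiffBump (0 : ℝ)) (x : ℝ) : 0 ≤ tf m β x :=
  mul_nonneg (hm.pow_nonneg x) β.nonneg

lemma tf_integrable (m : ℕ) (β : ContDiffBump (0 : ℝ)) (μ : Measure ℝ) [IsProbabilityMeasure μ] :
    Integrable (tf m β) μ := by
  obtain ⟨C, -, h⟩ := bdd_of_cs (tf_smooth m β).continuous (tf_cs m β)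
  exact int_of_bdd μ (tf_smooth m β).continuous h

lemma second_moment : ∃ C, 0 ≤ C ∧ ∀ (μ : ℝ → Measure ℝ) (A B D : ℝ) (ν : Measure ℝ),
    IsLevy μ A B ν → 0 ≤ A → |B| ≤ D → ∫ r, min |r| (r ^ 2) ∂ν ≤ D → ∀ s, 0 < s → A * s ≤ 1 →
    |∫ x, tp 2 1 x ∂(μ s) - 2 * (A * s)| ≤ C * ((A * s) ^ 5 + s * D) := by
  let β1 : ContDiffBump (0 : ℝ) := ⟨1 / 2, 1, by norm_num, by norm_num⟩
  let β2 : ContDiffBump (0 : ℝ) := ⟨1, 2, by norm_num, by norm_num⟩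
  obtain ⟨C1, hC1, h1⟩ := expansion 5 (tf 2 β1) (tf_smooth 2 β1) (tf_cs 2 β1)
  obtain ⟨C2, hC2, h2⟩ := expansion 5 (tf 2 β2) (tf_smooth 2 β2) (tf_cs 2 β2)
  refine ⟨C1 + C2, by positivity, fun μ A B D ν hL hA hB hD s hs hAs => ?_⟩
  have e1 := h1 μ A B D ν hL hA hB hD s hs hAs
  have e2 := h2 μ A B D ν hL hA hB hD s hs hAs
  rw [expo_congr 5 (tf_germ 2 _), expo_pow2] at e1 e2
  have := hL.prob s hs
  have hD0 : 0 ≤ D := (abs_nonneg B).trans hB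
  have i1 : ∫ x, tf 2 β1 x ∂(μ s) ≤ ∫ x, tp 2 1 x ∂(μ s) :=
    integral_mono (tf_integrable _ _ _) (tp_integrable _ zero_le_one _)
      (fun x => tf_le_tp even_two β1 x)
  have i2 : ∫ x, tp 2 1 x ∂(μ s) ≤ ∫ x, tf 2 β2 x ∂(μ s) :=
    integral_mono (tp_integrable _ zero_le_one _) (tf_integrable _ _ _)
      (fun x => tp_le_tf even_two β2 x)
  have p : 0 ≤ (A * s) ^ 5 + s * D := by positivity
  rw [abs_le] at e1 e2 ⊢
  have := mul_nonneg hC1 p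
  have := mul_nonneg hC2 p
  constructor <;> nlinarith

lemma tf4_expansion (β : ContDiffBump (0 : ℝ)) (δ : ℝ) (hδ : 0 < δ) :
    ∃ C, 0 ≤ C ∧ ∀ (μ : ℝ → Measure ℝ) (A B D : ℝ) (ν : Measure ℝ),
    IsLevy μ A B ν → 0 ≤ A → |B| ≤ D → ∫ r, min |r| (r ^ 2) ∂ν ≤ D → ∀ s, 0 < s → A * s ≤ 1 →
    |∫ x, tf 4 β x ∂(μ s) - (12 * (A * s) ^ 2 + s * ∫ r, tf 4 β r ∂ν)| ≤
      δ * (s * D) + C * ((A * s) ^ 5 + s * D * (A * s + s * D) + s * |B|) := by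
  obtain ⟨C, hC, h⟩ := main_expansion 4 (tf 4 β) (tf_smooth 4 β) (tf_cs 4 β) (by simp [tf])
    (by rw [(tf_germ 4 β).deriv_eq]; simp) δ hδ
  refine ⟨C, hC, fun μ A B D ν hL hA hB hD s hs hAs => ?_⟩
  have := h μ A B D ν hL hA hB hD s hs hAs
  rwa [expo_congr (4 + 1) (tf_germ 4 _), expo_pow4] at this

lemma near_one (Y t : ℝ) (ht : 0 < t) :
    ∃ η, 0 < η ∧ η < 1 ∧ |(1 + η) ^ (4 - Y) - 1| ≤ t ∧ |(1 - η) ^ (4 - Y) - 1| ≤ t := by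
  have hc : ContinuousAt (fun R : ℝ => R ^ (4 - Y)) 1 :=
    Real.continuousAt_rpow_const 1 (4 - Y) (Or.inl one_ne_zero)
  obtain ⟨d, hd, h⟩ := Metric.continuousAt_iff.1 hc t ht
  refine ⟨min (d / 2) (1 / 2), by positivity, by
    exact (min_le_right _ _).trans_lt (by norm_num), ?_, ?_⟩
  · have := h (x := 1 + min (d / 2) (1 / 2)) (by
      rw [Real.dist_eq, add_sub_cancel_left, abs_of_pos (by positivity)]
      exact (min_le_left _ _).trans_lt (by linarith))
    rw [Real.dist_eq, Real.one_rpow] at this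
    exact this.le
  · have := h (x := 1 - min (d / 2) (1 / 2)) (by
      rw [Real.dist_eq, sub_sub_cancel_left, abs_neg, abs_of_pos (by positivity)]
      exact (min_le_left _ _).trans_lt (by linarith))
    rw [Real.dist_eq, Real.one_rpow] at this
    exact this.le

set_option maxHeartbeats 2000000 in
lemma fourth_moment (Y : ℝ) (hY1 : 1 < Y) (hY2 : Y < 2) {Cp Cm : ℝ} (hCp : 0 < Cp) (hCm : 0 < Cm)
    {q : ℝ → ℝ} (hqm : Measurable q) (hq : ∀ x, 0 ≤ q x)
    (hq_lim : Tendsto q (𝓝[≠] (0 : ℝ)) (𝓝 1)) (D0 : ℝ) (hD0 : 0 ≤ D0) (δ : ℝ) (hδ : 0 < δ) :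
    ∃ C e0, 0 ≤ C ∧ 0 < e0 ∧ ∀ e, 0 < e → e < e0 → ∀ (μ : ℝ → Measure ℝ) (A B : ℝ),
    IsLevy μ A B (nuS Y Cp Cm q e) → 0 ≤ A → |B| ≤ D0 * e ^ (-Y) →
    ∫ r, min |r| (r ^ 2) ∂(nuS Y Cp Cm q e) ≤ D0 * e ^ (-Y) → ∀ s, 0 < s → A * s ≤ 1 →
    |∫ x, tp 4 1 x ∂(μ s) - (12 * (A * s) ^ 2 + (Cp + Cm) / (4 - Y) * (s * e ^ (-Y)))| ≤
      δ * (s * e ^ (-Y)) + C * ((A * s) ^ 5 +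
        s * (D0 * e ^ (-Y)) * (A * s + s * (D0 * e ^ (-Y))) + s * |B|) := by
  set c := (Cp + Cm) / (4 - Y) with hc
  have hc0 : 0 < c := div_pos (by linarith) (by linarith)
  set t := min 1 (δ / (6 * c)) with ht
  have ht0 : 0 < t := by positivity
  have ht1 : t ≤ 1 := min_le_left _ _
  have htc : c * (3 * t) ≤ δ / 2 := by
    have : t ≤ δ / (6 * c) := min_le_right _ _
    rw [le_div_iff₀ (by positivity)] at this
    linarith
  obtain ⟨η, hη, hη1, hη2, hη3⟩ := near_one Y t ht0
  obtain ⟨e0, he0, hF⟩ := nuS_fourth Y hY1 hY2 hCp hCm hqm hq hq_lim t ht0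
  let β1 : ContDiffBump (0 : ℝ) := ⟨1 - η, 1, by linarith, by linarith⟩
  let β2 : ContDiffBump (0 : ℝ) := ⟨1, 1 + η, by norm_num, by linarith⟩
  obtain ⟨C1, hC1, h1⟩ := tf4_expansion β1 (δ / (2 * (D0 + 1))) (by positivity)
  obtain ⟨C2, hC2, h2⟩ := tf4_expansion β2 (δ / (2 * (D0 + 1))) (by positivity)
  refine ⟨C1 + C2, e0, by positivity, he0, fun e he hee μ A B hL hA hB hD s hs hAs => ?_⟩
  have e1 := h1 μ A B _ _ hL hA hB hD s hs hAs
  have e2 := h2 μ A B _ _ hL hA hB hD s hs hAs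
  have := hL.prob s hs
  have ev : Even 4 := ⟨2, rfl⟩
  set w := e ^ (-Y) with hw
  have hw0 : 0 < w := Real.rpow_pos_of_pos he _
  set ν := nuS Y Cp Cm q e with hν
  have i1 : ∫ x, tf 4 β1 x ∂(μ s) ≤ ∫ x, tp 4 1 x ∂(μ s) :=
    integral_mono (tf_integrable _ _ _) (tp_integrable _ zero_le_one _)
      (fun x => tf_le_tp ev β1 x)
  have i2 : ∫ x, tp 4 1 x ∂(μ s) ≤ ∫ x, tf 4 β2 x ∂(μ s) :=
    integral_mono (tp_integrable _ zero_le_one _) (tf_integrable _ _ _)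
      (fun x => tp_le_tf ev β2 x)
  obtain ⟨I1, J1⟩ := hF e he hee (1 - η) (by linarith) (by linarith)
  obtain ⟨I0, J0⟩ := hF e he hee 1 (by linarith) (by linarith)
  obtain ⟨I2, J2⟩ := hF e he hee (1 + η) (by linarith) (by linarith)
  change Integrable (tp 4 (1 - η)) ν at I1
  change Integrable (tp 4 1) ν at I0
  change Integrable (tp 4 (1 + η)) ν at I2
  change |∫ r, tp 4 (1 - η) r ∂ν - _| ≤ _ at J1
  change |∫ r, tp 4 (1 + η) r ∂ν - _| ≤ _ at J2
  have g1 : Integrable (tf 4 β1) ν := I0.mono' (tf_smooth 4 β1).continuous.aestronglyMeasurable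
    (Eventually.of_forall fun x => by
      rw [Real.norm_eq_abs, abs_of_nonneg (tf_nonneg ev _ _)]; exact tf_le_tp ev β1 x)
  have g2 : Integrable (tf 4 β2) ν := I2.mono' (tf_smooth 4 β2).continuous.aestronglyMeasurable
    (Eventually.of_forall fun x => by
      rw [Real.norm_eq_abs, abs_of_nonneg (tf_nonneg ev _ _)]; exact tf_le_tp ev β2 x)
  have k1 : ∫ x, tp 4 (1 - η) x ∂ν ≤ ∫ x, tf 4 β1 x ∂ν :=
    integral_mono I1 g1 (fun x => tp_le_tf ev β1 x)
  have k2 : ∫ x, tf 4 β2 x ∂ν ≤ ∫ x, tp 4 (1 + η) x ∂ν :=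
    integral_mono g2 I2 (fun x => tf_le_tp ev β2 x)
  rw [abs_le] at J1 J2 hη2 hη3 e1 e2
  set R1 := (1 - η) ^ (4 - Y) with hR1
  set R2 := (1 + η) ^ (4 - Y) with hR2
  have l1 : c * w - δ / 2 * w ≤ ∫ x, tf 4 β1 x ∂ν := by
    have a1 : c * R1 * w * (1 - t) ≤ ∫ x, tf 4 β1 x ∂ν := by linarith [J1.1]
    have a2 : (1 - t) * (1 - t) ≤ R1 * (1 - t) :=
      mul_le_mul_of_nonneg_right (by linarith) (by linarith)
    have a3 : 1 - 3 * t ≤ R1 * (1 - t) := by nlinarith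
    have a4 : c * w * (1 - 3 * t) ≤ c * w * (R1 * (1 - t)) :=
      mul_le_mul_of_nonneg_left a3 (by positivity)
    have a5 := mul_le_mul_of_nonneg_right htc hw0.le
    linarith
  have l2 : ∫ x, tf 4 β2 x ∂ν ≤ c * w + δ / 2 * w := by
    have a1 : ∫ x, tf 4 β2 x ∂ν ≤ c * R2 * w * (1 + t) := by linarith [J2.2]
    have a2 : R2 * (1 + t) ≤ (1 + t) * (1 + t) :=
      mul_le_mul_of_nonneg_right (by linarith) (by linarith)
    have a3 : R2 * (1 + t) ≤ 1 + 3 * t := by nlinarith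
    have a4 : c * w * (R2 * (1 + t)) ≤ c * w * (1 + 3 * t) :=
      mul_le_mul_of_nonneg_left a3 (by positivity)
    have a5 := mul_le_mul_of_nonneg_right htc hw0.le
    linarith
  have l1' := mul_le_mul_of_nonneg_left l1 hs.le
  have l2' := mul_le_mul_of_nonneg_left l2 hs.le
  have d1 : δ / (2 * (D0 + 1)) * (s * (D0 * w)) ≤ δ / 2 * (s * w) := by
    have : δ / (2 * (D0 + 1)) * (s * (D0 * w)) = δ / 2 * (s * w) * (D0 / (D0 + 1)) := by
      field_simp
    rw [this]
    exact mul_le_of_le_one_right (by positivity) (by rw [div_le_one (by positivity)]; linarith)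
  set E := (A * s) ^ 5 + s * (D0 * w) * (A * s + s * (D0 * w)) + s * |B| with hE
  have hE0 : 0 ≤ E := by positivity
  have m1 := mul_nonneg hC1 hE0
  have m2 := mul_nonneg hC2 hE0
  rw [abs_le]
  constructor <;> linarith [e1.1, e1.2, e2.1, e2.2]

/-! ### Asymptotics -/

lemma rpow_tendsto_zero {p : ℝ} (hp : 0 < p) :
    Tendsto (fun h : ℝ => h ^ p) (𝓝[>] (0 : ℝ)) (𝓝 0) := by
  have := (Real.continuousAt_rpow_const 0 p (Or.inr hp.le)).tendsto
  rw [Real.zero_rpow hp.ne'] at this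
  exact this.mono_left nhdsWithin_le_nhds

lemma asymp_gen {ε : ℝ → ℝ} (hεpos : ∀ h : ℝ, 0 < h → 0 < ε h) {k : ℝ}
    (hlo : Tendsto (fun h => ε h * h ^ (-k)) (𝓝[>] (0 : ℝ)) atTop) {r p : ℝ} (hp : 0 < p)
    (hr : 0 < r - p * k) :
    Tendsto (fun h => h ^ r * ε h ^ (-p)) (𝓝[>] (0 : ℝ)) (𝓝 0) := by
  have h1 := (tendsto_rpow_neg_atTop hp).comp hlo
  have h2 := h1.mul (rpow_tendsto_zero hr)
  rw [mul_zero] at h2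
  refine h2.congr' ?_
  filter_upwards [self_mem_nhdsWithin] with h hh
  have hh : 0 < h := hh
  simp only [Function.comp]
  rw [Real.mul_rpow (hεpos h hh).le (by positivity), ← Real.rpow_mul hh.le, mul_assoc,
    ← Real.rpow_add hh, mul_comm]
  congr 2
  ring

lemma asymp_eps {ε : ℝ → ℝ} {k : ℝ} (hk : 0 < k)
    (hhi : Tendsto (fun h => ε h * h ^ (-k)) (𝓝[>] (0 : ℝ)) (𝓝 0)) :
    Tendsto ε (𝓝[>] (0 : ℝ)) (𝓝 0) := by
  have h2 := hhi.mul (rpow_tendsto_zero hk)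
  rw [mul_zero] at h2
  refine h2.congr' ?_
  filter_upwards [self_mem_nhdsWithin] with h hh
  have hh : 0 < h := hh
  rw [mul_assoc, ← Real.rpow_add hh, neg_add_cancel, Real.rpow_zero, mul_one]

lemma tp_scale (m : ℕ) {e : ℝ} (he : 0 < e) (x : ℝ) : tp m e x = e ^ m * tp m 1 (e⁻¹ * x) := by
  have hiff : |e⁻¹ * x| ≤ 1 ↔ |x| ≤ e := by
    rw [abs_mul, abs_of_pos (inv_pos.2 he), inv_mul_le_iff₀ he, mul_one]
  by_cases h : |x| ≤ e
  · rw [tp_of_le m h, tp_of_le m (hiff.2 h), mul_pow, inv_pow]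
    field_simp
  · rw [tp_of_not m h, tp_of_not m (fun h' => h (hiff.1 h')), mul_zero]

lemma variance_tp {Ω : Type*} [MeasurableSpace Ω] (P : Measure Ω) [IsProbabilityMeasure P]
    {X : Ω → ℝ} (hX : Measurable X) {e : ℝ} (he : 0 < e) :
    variance (fun ω => tp 2 e (X ω)) P =
      e ^ 4 * (∫ x, tp 4 1 x ∂(P.map fun ω => e⁻¹ * X ω) -
        (∫ x, tp 2 1 x ∂(P.map fun ω => e⁻¹ * X ω)) ^ 2) := by
  have hm : Measurable (fun ω => tp 2 e (X ω)) := (tp_meas 2 e).comp hX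
  have hL : MemLp (fun ω => tp 2 e (X ω)) 2 P :=
    MemLp.of_bound hm.aestronglyMeasurable (e ^ 2)
      (Eventually.of_forall fun ω => tp_abs_le 2 he.le (X ω))
  rw [variance_eq_sub hL, integral_map (by fun_prop) (tp_meas 4 1).aestronglyMeasurable,
    integral_map (by fun_prop) (tp_meas 2 1).aestronglyMeasurable]
  have a1 : ∀ ω, ((fun ω => tp 2 e (X ω)) ^ 2) ω = e ^ 4 * tp 4 1 (e⁻¹ * X ω) := by
    intro ω
    rw [← tp_scale 4 he, Pi.pow_apply]
    by_cases h : |X ω| ≤ e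
    · simp only [tp_of_le _ h]; ring
    · simp only [tp_of_not _ h]; ring
  have a2 : ∀ ω, tp 2 e (X ω) = e ^ 2 * tp 2 1 (e⁻¹ * X ω) := fun ω => tp_scale 2 he _
  simp_rw [a1, a2]
  rw [integral_const_mul, integral_const_mul]
  ring

/-- asymptotics of the variance of the truncated squared increment:
`Var(X_h² 1_{|X_h|≤ε}) = 2σ⁴h² + ((C₊+C₋)/(4−Y)) h ε^{4−Y} + o(h ε^{4−Y})`. -/
theorem variance_truncated_square
    {Ω : Type*} [MeasurableSpace Ω] (P : Measure Ω) [IsProbabilityMeasure P]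
    (Y Cp Cm σ b : ℝ) (q : ℝ → ℝ)
    (hY1 : 1 < Y) (hY2 : Y < 2)
    (hCp : 0 < Cp) (hCm : 0 < Cm) (hσ : 0 < σ)
    (hq_meas : Measurable q) (hq_nonneg : ∀ x, 0 ≤ q x)
    (hq_bdd : ∃ M : ℝ, ∀ x, q x ≤ M)
    (hq_lim : Tendsto q (𝓝[≠] (0 : ℝ)) (𝓝 1))
    (hq_taylor : ∃ αp αm : ℝ, αp ≠ 0 ∧ αm ≠ 0 ∧
      IntegrableOn (fun x => |q x - 1 - αp * x| * x ^ (-Y - 1)) (Set.Ioc (0 : ℝ) 1) ∧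
      IntegrableOn (fun x => |q x - 1 - αm * x| * |x| ^ (-Y - 1)) (Set.Ico (-1 : ℝ) 0))
    (hq_log : ∃ K M : ℝ, ∀ x : ℝ, M ≤ |x| → |Real.log (q x)| ≤ K * |x|)
    (hq_inf : ∀ ε : ℝ, 0 < ε → ∃ c : ℝ, 0 < c ∧ ∀ x : ℝ, x ≠ 0 → |x| < ε → c ≤ q x)
    (hq_sq : IntegrableOn (fun x => q x ^ 2 * |x| ^ (-1 - Y)) {x : ℝ | 1 < |x|})
    -- the jump part `J` and the Brownian part `W`
    (J : ℝ → Ω → ℝ) (W : Ω → ℝ)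
    (hWmeas : Measurable W) (hW : P.map W = gaussianReal 0 1)
    (hJmeas : ∀ h : ℝ, Measurable (J h))
    (hJcf : ∀ h : ℝ, 0 < h → ∀ u : ℝ,
      ∫ ω, Complex.exp (Complex.I * u * J h ω) ∂P = Complex.exp (h * psiJ b Y Cp Cm q u))
    (hindep : ∀ h : ℝ, 0 < h → IndepFun W (J h) P)
    (hY85 : Y < 8 / 5)
    -- the threshold `ε = ε(h)`
    (ε : ℝ → ℝ) (hεpos : ∀ h : ℝ, 0 < h → 0 < ε h)
    (hε_lo : Tendsto (fun h => ε h * h ^ (-(4 : ℝ) / (8 + Y))) (𝓝[>] (0 : ℝ)) atTop)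
    (hε_hi : Tendsto (fun h => ε h * h ^ (-(1 : ℝ) / (4 - Y))) (𝓝[>] (0 : ℝ)) (𝓝 0)) :
    (fun h : ℝ =>
        variance (fun ω => Set.indicator {x : ℝ | |x| ≤ ε h} (fun x => x ^ 2)
          (σ * Real.sqrt h * W ω + J h ω)) P
        - (2 * σ ^ 4 * h ^ 2 + (Cp + Cm) / (4 - Y) * h * ε h ^ (4 - Y)))
      =o[𝓝[>] (0 : ℝ)] (fun h => h * ε h ^ (4 - Y)) := by
  obtain ⟨C0, hC0, hK⟩ := nuS_K Y hY1 hY2 hCp hCm hq_meas hq_nonneg hq_bdd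
  set bt := bT b Y Cp Cm q with hbt
  set D0 := C0 + |bt| with hD0
  have hD00 : 0 ≤ D0 := by positivity
  set c := (Cp + Cm) / (4 - Y) with hc
  obtain ⟨C2, hC2, hM2⟩ := second_moment
  have hlo : Tendsto (fun h => ε h * h ^ (-(4 / (8 + Y)))) (𝓝[>] (0 : ℝ)) atTop := by
    simpa only [neg_div] using hε_lo
  have hhi : Tendsto (fun h => ε h * h ^ (-(1 / (4 - Y)))) (𝓝[>] (0 : ℝ)) (𝓝 0) := by
    simpa only [neg_div] using hε_hi
  have hY8 : 0 < 8 + Y := by linarith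
  have t1 : Tendsto ε (𝓝[>] (0 : ℝ)) (𝓝 0) :=
    asymp_eps (div_pos one_pos (by linarith)) hhi
  have t2 : Tendsto (fun h => h ^ (1 : ℝ) * ε h ^ (-(2 : ℝ))) (𝓝[>] (0 : ℝ)) (𝓝 0) :=
    asymp_gen hεpos hlo (by norm_num) (by
      rw [show (1 : ℝ) - 2 * (4 / (8 + Y)) = Y / (8 + Y) by field_simp; ring]
      exact div_pos (by linarith) hY8)
  have t3 : Tendsto (fun h => h ^ (1 : ℝ) * ε h ^ (-Y)) (𝓝[>] (0 : ℝ)) (𝓝 0) :=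
    asymp_gen hεpos hlo (by linarith) (by
      rw [show (1 : ℝ) - Y * (4 / (8 + Y)) = (8 - 3 * Y) / (8 + Y) by field_simp; ring]
      exact div_pos (by linarith) hY8)
  have t4 : Tendsto (fun h => h ^ (4 : ℝ) * ε h ^ (-(10 - Y))) (𝓝[>] (0 : ℝ)) (𝓝 0) :=
    asymp_gen hεpos hlo (by linarith) (by
      rw [show (4 : ℝ) - (10 - Y) * (4 / (8 + Y)) = (8 * Y - 8) / (8 + Y) by field_simp; ring]
      exact div_pos (by linarith) hY8)
  have t5 : Tendsto (fun h => ε h ^ (Y - 1)) (𝓝[>] (0 : ℝ)) (𝓝 0) := by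
    refine (rpow_tendsto_zero (p := Y - 1) (by linarith)).comp ?_
    refine tendsto_nhdsWithin_iff.2 ⟨t1, ?_⟩
    filter_upwards [self_mem_nhdsWithin] with h hh using hεpos h hh
  rw [Asymptotics.isLittleO_iff]
  intro c' hc'
  obtain ⟨C4, e0, hC4, he0, hM4⟩ := fourth_moment Y hY1 hY2 hCp hCm hq_meas hq_nonneg hq_lim D0
    hD00 (c' / 2) (by positivity)
  -- the auxiliary small quantities
  let xx : ℝ → ℝ := fun h => σ ^ 2 / 2 * (h ^ (1 : ℝ) * ε h ^ (-(2 : ℝ)))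
  let rr : ℝ → ℝ := fun h => h ^ (1 : ℝ) * ε h ^ (-Y)
  let k1 : ℝ → ℝ := fun h => (σ ^ 2 / 2) ^ 5 * (h ^ (4 : ℝ) * ε h ^ (-(10 - Y)))
  let k2 : ℝ → ℝ := fun h => |bt| * ε h ^ (Y - 1)
  have tx : Tendsto xx (𝓝[>] (0 : ℝ)) (𝓝 0) := by
    have := t2.const_mul (σ ^ 2 / 2)
    rwa [mul_zero] at this
  have tk1 : Tendsto k1 (𝓝[>] (0 : ℝ)) (𝓝 0) := by
    have := t4.const_mul ((σ ^ 2 / 2) ^ 5)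
    rwa [mul_zero] at this
  have tk2 : Tendsto k2 (𝓝[>] (0 : ℝ)) (𝓝 0) := by
    have := t5.const_mul |bt|
    rwa [mul_zero] at this
  have tr : Tendsto rr (𝓝[>] (0 : ℝ)) (𝓝 0) := t3
  have tG : Tendsto (fun h => c' / 2 + C4 * (k1 h + D0 * (xx h + D0 * rr h) + k2 h) +
      C2 * (k1 h + D0) * (4 * xx h + C2 * (k1 h + D0) * rr h)) (𝓝[>] (0 : ℝ)) (𝓝 (c' / 2)) := by
    have := ((tk1.add ((tx.add (tr.const_mul D0)).const_mul D0)).add tk2).const_mul C4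
    have h2 := ((tk1.add_const D0).const_mul C2).mul
      ((tx.const_mul 4).add (((tk1.add_const D0).const_mul C2).mul tr))
    have h3 := (this.const_add (c' / 2)).add h2
    simpa using h3
  filter_upwards [self_mem_nhdsWithin, tG.eventually (gt_mem_nhds (half_lt_self hc')),
    t1.eventually (gt_mem_nhds (lt_min he0 one_pos)), tx.eventually (gt_mem_nhds one_pos)]
    with h hh hG hee hx1
  have hh : 0 < h := hh
  have he := hεpos h hh
  set e := ε h with hedef
  have hee0 : e < e0 := lt_of_lt_of_le hee (min_le_left _ _)
  have hee1 : e < 1 := lt_of_lt_of_le hee (min_le_right _ _)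
  have hJh := hJmeas h
  have hL := isLevy_muS P Y Cp Cm σ b q hY1 hY2 hCp hCm hq_meas hq_nonneg hq_bdd J W hWmeas hW
    hJmeas hJcf hindep e he
  set A := σ ^ 2 / 2 / e ^ 2 with hA
  have hA0 : 0 ≤ A := by positivity
  have hem2 : e ^ (-(2 : ℝ)) = (e ^ 2)⁻¹ := by
    rw [Real.rpow_neg he.le]; norm_cast
  have hx : A * h = xx h := by
    simp only [xx, ← hedef, Real.rpow_one, hem2, hA]
    ring
  have hw0 : 0 < e ^ (-Y) := Real.rpow_pos_of_pos he _
  have hr : h * e ^ (-Y) = rr h := by simp only [rr, ← hedef, Real.rpow_one]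
  have hB1 : |bt / e| = |bt| * e ^ (Y - 1) * e ^ (-Y) := by
    rw [abs_div, abs_of_pos he, mul_assoc, ← Real.rpow_add he,
      show Y - 1 + -Y = -1 by ring, Real.rpow_neg_one]
    rfl
  have hB : |bt / e| ≤ D0 * e ^ (-Y) := by
    rw [hB1]
    refine mul_le_mul_of_nonneg_right ?_ hw0.le
    have : e ^ (Y - 1) ≤ 1 := Real.rpow_le_one he.le hee1.le (by linarith)
    have := mul_le_of_le_one_right (abs_nonneg bt) this
    linarith
  have hD : ∫ r, min |r| (r ^ 2) ∂(nuS Y Cp Cm q e) ≤ D0 * e ^ (-Y) :=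
    (hK e he).2.trans (mul_le_mul_of_nonneg_right (by linarith [abs_nonneg bt]) hw0.le)
  have hAs : A * h ≤ 1 := by rw [hx]; exact hx1.le
  have E4 := hM4 e he hee0 _ A _ hL hA0 hB hD h hh hAs
  have E2 := hM2 _ A _ _ _ hL hA0 hB hD h hh hAs
  have hx5 : xx h ^ 5 = k1 h * rr h := by
    simp only [xx, k1, rr, ← hedef, Real.rpow_one]
    rw [show -(10 - Y) = (-(2 : ℝ)) * 5 + Y by ring, Real.rpow_add he, Real.rpow_mul he.le,
      Real.rpow_neg he.le Y]
    have q1 : (e ^ (-(2 : ℝ))) ^ (5 : ℝ) = (e ^ (-(2 : ℝ))) ^ 5 := by norm_cast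
    have q2 : h ^ (4 : ℝ) = h ^ 4 := by norm_cast
    have q3 : e ^ Y ≠ 0 := (Real.rpow_pos_of_pos he _).ne'
    rw [q1, q2]
    field_simp
  have hsB : h * |bt / e| = k2 h * rr h := by
    rw [hB1, ← hr]; simp only [k2, ← hedef]; ring
  set M4 := ∫ x, tp 4 1 x ∂(muS P σ J W e h) with hM4d
  set M2 := ∫ x, tp 2 1 x ∂(muS P σ J W e h) with hM2d
  have hV : variance (fun ω => Set.indicator {x : ℝ | |x| ≤ e} (fun x => x ^ 2)
          (σ * Real.sqrt h * W ω + J h ω)) P = e ^ 4 * (M4 - M2 ^ 2) :=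
    variance_tp P (X := fun ω => σ * Real.sqrt h * W ω + J h ω) (by fun_prop) he
  have hrho : h * e ^ (4 - Y) = e ^ 4 * rr h := by
    rw [← hr, sub_eq_add_neg, Real.rpow_add he]
    have : e ^ (4 : ℝ) = e ^ 4 := by norm_cast
    rw [this]; ring
  have hr0 : 0 < rr h := by rw [← hr]; positivity
  have hx0 : 0 ≤ xx h := by rw [← hx]; positivity
  have hk10 : 0 ≤ k1 h := by positivity
  have hxe : 8 * xx h ^ 2 * e ^ 4 = 2 * σ ^ 4 * h ^ 2 := by
    rw [← hx, hA]; field_simp; ring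
  rw [hV, mul_assoc c, hrho, Real.norm_eq_abs, Real.norm_eq_abs,
    abs_of_pos (by positivity : 0 < e ^ 4 * rr h), ← hxe]
  rw [show e ^ 4 * (M4 - M2 ^ 2) - (8 * xx h ^ 2 * e ^ 4 + c * (e ^ 4 * rr h)) =
    e ^ 4 * ((M4 - (12 * xx h ^ 2 + c * rr h)) - (M2 ^ 2 - (2 * xx h) ^ 2)) by ring, abs_mul,
    abs_of_pos (by positivity : 0 < e ^ 4)]
  rw [show h * (D0 * e ^ (-Y)) = D0 * rr h by rw [← hr]; ring, hx] at E4 E2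
  rw [hr, hx5, hsB] at E4
  rw [hx5] at E2
  set ρ := rr h
  set x := xx h
  set a := C2 * (k1 h + D0) with ha
  have ha0 : 0 ≤ a := by positivity
  have E2' : |M2 - 2 * x| ≤ a * ρ := by
    refine E2.trans (le_of_eq ?_); rw [ha]; ring
  have E3 : |M2 ^ 2 - (2 * x) ^ 2| ≤ a * ρ * (4 * x + a * ρ) := by
    rw [show M2 ^ 2 - (2 * x) ^ 2 = (M2 - 2 * x) * (M2 + 2 * x) by ring, abs_mul]
    have : |M2 + 2 * x| ≤ 4 * x + a * ρ := by
      rw [abs_le] at E2' ⊢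
      constructor <;> linarith [E2'.1, E2'.2]
    exact mul_le_mul E2' this (abs_nonneg _) (by positivity)
  have E5 : |(M4 - (12 * x ^ 2 + c * ρ)) - (M2 ^ 2 - (2 * x) ^ 2)| ≤ c' * ρ := by
    refine (abs_sub _ _).trans ((add_le_add E4 E3).trans ?_)
    have := mul_le_mul_of_nonneg_right hG.le hr0.le
    refine le_trans (le_of_eq ?_) this
    ring
  have := mul_le_mul_of_nonneg_left E5 (by positivity : 0 ≤ e ^ 4)
  linarith

end
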